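/- Let t ≥ 1 be an integer, let q ∈ ℂ with 0 < |q| < 1, and let x ∈ ℂ with |q| < |x| < |q|^{-1}. Then q^{-t} Σ_{1 ≤ k_1 ≤ … ≤ k_t} (xq;q)_{k_t-1} (q/x;q)_{k_t-1} q^{k_t} Π_{i=1}^{t-1} q^{k_i^2} [k_{i+1} + k_i - i + 2Σ_{j=1}^{i-1} k_j choose k_{i+1} - k_i]_q = -q^{-t/2 - 1/8} · ((xq;q)_∞ (q/x;q)_∞ / ((q;q)_∞)^2) · ( Σ_{r,s,u ≥ 0, r ≢ s (mod 2)} + Σ_{r,s,u < 0, r ≢ s (mod 2)} ) (-1)^{(r-s-1)/2} x^u q^{r^2/8 + (4t+3)rs/4 + s^2/8 + (2+t)r/2 + t s/2 + u(r+s+1)/2}, where each of the series converges absolutely. Note that for integers r ≢ s (mod 2), the quantities (r-s-1)/2 and (r+s+1)/2 are integers, and the total exponent of q in each term (including the prefactor exponent -t/2 - 1/8) is an integer. -/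

import Mathlib

open Finset

/-- The finite q-Pochhammer symbol `(a;q)_n`. -/
noncomputable def qPoch (q a : ℂ) (n : ℕ) : ℂ := ∏ j ∈ Finset.range n, (1 - a * q ^ j)

/-- The infinite q-Pochhammer symbol `(a;q)_∞`. -/
noncomputable def qPochInf (q a : ℂ) : ℂ := ∏' j : ℕ, (1 - a * q ^ j)

/-- The Gaussian binomial coefficient `[n choose k]_q`, zero outside `0 ≤ k ≤ n`. -/
noncomputable def qBinom (q : ℂ) (n k : ℤ) : ℂ :=
  if 0 ≤ k ∧ k ≤ n then
    ∏ j ∈ Finset.range k.toNat, (1 - q ^ (n - k + (j : ℤ) + 1)) / (1 - q ^ ((j : ℤ) + 1))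
  else 0

/-- The product `Π_{i=1}^{t-1} q^{k_i^2} [k_{i+1}+k_i-i+2Σ_{j<i}k_j choose k_{i+1}-k_i]_q`
appearing in the generalized U-function `U_t` (tuple of length `t+1`, i.e. the paper's
`t` equals `t+1`). -/
noncomputable def UtProd (q : ℂ) (t : ℕ) (K : Fin (t+1) → ℕ) : ℂ :=
  ∏ i : Fin t, (q ^ (K i.castSucc ^ 2) *
    qBinom q ((K i.succ : ℤ) + (K i.castSucc : ℤ) - ((i : ℕ) + 1)
        + 2 * ∑ j ∈ Finset.univ.filter (fun j : Fin (t+1) => (j : ℕ) < (i : ℕ)), (K j : ℤ))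
      ((K i.succ : ℤ) - (K i.castSucc : ℤ)))

/-- The summand of the multisum defining `U_t(-x;q)`. -/
noncomputable def UtTerm (q x : ℂ) (t : ℕ) (K : Fin (t+1) → ℕ) : ℂ :=
  qPoch q (x * q) (K (Fin.last t) - 1) * qPoch q (q / x) (K (Fin.last t) - 1) *
    q ^ (K (Fin.last t)) * UtProd q t K

/-- The Hecke-type triple-sum summand `(-1)^{(r-s-1)/2} x^u q^{E}` where the integer
exponent `E = r²/8 + (4T+3)rs/4 + s²/8 + (2+T)r/2 + Ts/2 + u(r+s+1)/2 - T/2 - 1/8`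
(the prefactor exponent `-T/2 - 1/8` has been absorbed, making the total exponent of
`q` an integer, as noted in the statement); the paper's `t` is `T`. -/
noncomputable def heckeTerm3 (q x : ℂ) (T : ℤ) (p : ℤ × ℤ × ℤ) : ℂ :=
  (-1 : ℂ) ^ ((p.1 - p.2.1 - 1) / 2) * x ^ p.2.2 *
    q ^ ((p.1 ^ 2 + p.2.1 ^ 2 + 2 * (4 * T + 3) * p.1 * p.2.1
          + 4 * (2 + T) * p.1 + 4 * T * p.2.1 - 4 * T - 1
          + 4 * p.2.2 * (p.1 + p.2.1 + 1)) / 8)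

/-!
Grouping the terms of `U_t` by the last index `k_t = N + 1` gives `∑ (xq)_N (q/x)_N q^(N+1) β_N`.
The sequence `β` is part of a Bailey pair relative to `q²`, and Bailey inversion expresses its
partner `α_M` as `β` summed against the kernel `(q⁻ᴹ)_K (qᴹ⁺²)_K q^K`. Summation over one index of
`U_t` is a linear operator which, up to parameter shifts, acts on these kernels by a triangular
matrix with eigenvalues of the form `q^((k+1)² + c(2k+1))`; the `q`-Vandermonde identity
diagonalizes it, so that its powers give `α_M` as a finite sum of Hecke type.

The Bailey lemma, a consequence of the telescoping `q`-Gauss sum, turns the series into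
`∑ α_M q^(M+1) / ((1 - x q^(M+1)) (1 - q^(M+1)/x))`. Partial fractions separate the two factors of
the denominator, and expanding each in a geometric series over `u` gives one of the two triple
sums: `(r, s, u) ↦ (-1 - s, -1 - r, -1 - u)`, `x ↦ 1/x` turns the part `u < 0` into a copy of the
first sum in which `u` is shifted by one.
-/

section AntidiagonalSums

variable {M : Type*} [AddCommMonoid M]

theorem sum_antidiagonal_assoc (f : ℕ → ℕ → ℕ → M) (n : ℕ) :
    ∑ p ∈ antidiagonal n, ∑ r ∈ antidiagonal p.1, f r.1 r.2 p.2 =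
      ∑ p ∈ antidiagonal n, ∑ r ∈ antidiagonal p.2, f p.1 r.1 r.2 := by
  rw [sum_sigma', sum_sigma']
  refine sum_nbij' (fun s ↦ ⟨(s.2.1, s.2.2 + s.1.2), (s.2.2, s.1.2)⟩)
    (fun s ↦ ⟨(s.1.1 + s.2.1, s.2.2), (s.1.1, s.2.1)⟩) ?_ ?_ ?_ ?_ ?_ <;>
  · rintro ⟨⟨a, b⟩, c, d⟩ h
    simp only [mem_sigma, HasAntidiagonal.mem_antidiagonal] at h
    obtain ⟨rfl, rfl⟩ := h
    simp [add_assoc]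

theorem sum_antidiagonal_add_of_snd_lt {f : ℕ → ℕ → M} {p : ℕ} (hf : ∀ d e, e < p → f d e = 0)
    (n : ℕ) :
    ∑ r ∈ antidiagonal (p + n), f r.1 r.2 = ∑ r ∈ antidiagonal n, f r.1 (p + r.2) := by
  rw [← sum_filter_of_ne (p := fun r : ℕ × ℕ ↦ p ≤ r.2)
      fun r _ hr ↦ not_lt.1 fun h ↦ hr (hf _ _ h),
    Nat.antidiagonal_filter_le_snd_of_le (Nat.le_add_right p n), sum_map]
  simp [add_comm p]

theorem sum_range_eq_of_lt {f : ℕ → M} {n m : ℕ} (hnm : n < m) (hf : ∀ b, n < b → f b = 0) :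
    ∑ b ∈ range m, f b = ∑ b ∈ range (n + 1), f b :=
  (eventually_constant_sum hf hnm).trans rfl

end AntidiagonalSums

section QPochhammer

variable {q : ℂ}

theorem qPoch_zero (q a : ℂ) : qPoch q a 0 = 1 := prod_range_zero _

theorem qPoch_succ (q a : ℂ) (n : ℕ) : qPoch q a (n + 1) = qPoch q a n * (1 - a * q ^ n) :=
  prod_range_succ _ _

theorem qPoch_add (q a : ℂ) (m n : ℕ) :
    qPoch q a (m + n) = qPoch q a m * qPoch q (a * q ^ m) n := by
  simp only [qPoch, prod_range_add, pow_add, mul_assoc]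

theorem qPoch_succ' (q a : ℂ) (n : ℕ) :
    qPoch q a (n + 1) = (1 - a) * qPoch q (a * q) n := by
  rw [add_comm, qPoch_add, qPoch_succ, qPoch_zero, pow_zero, pow_one, mul_one, one_mul]

theorem qPoch_self_succ (q : ℂ) (n : ℕ) :
    qPoch q q (n + 1) = qPoch q q n * (1 - q ^ (n + 1)) := by
  rw [qPoch_succ, pow_succ']

theorem one_sub_pow_succ_ne_zero (hq : ¬IsOfFinOrder q) (n : ℕ) : 1 - q ^ (n + 1) ≠ 0 :=
  fun h ↦ hq <| isOfFinOrder_iff_pow_eq_one.2 ⟨n + 1, n.succ_pos, (sub_eq_zero.1 h).symm⟩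

theorem one_sub_self_mul_pow_ne_zero (hq : ¬IsOfFinOrder q) (n : ℕ) : 1 - q * q ^ n ≠ 0 := by
  simpa only [← pow_succ'] using one_sub_pow_succ_ne_zero hq n

theorem qPoch_self_ne_zero (hq : ¬IsOfFinOrder q) (n : ℕ) : qPoch q q n ≠ 0 :=
  prod_ne_zero_iff.2 fun j _ ↦ one_sub_self_mul_pow_ne_zero hq j

theorem qPoch_pow_succ (hq : ¬IsOfFinOrder q) (k n : ℕ) :
    qPoch q (q ^ (k + 1)) n = qPoch q q (k + n) / qPoch q q k := by
  rw [qPoch_add, ← pow_succ', mul_div_cancel_left₀ _ (qPoch_self_ne_zero hq k)]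

theorem qPoch_inv_pow_of_lt (hq0 : q ≠ 0) {n p : ℕ} (h : n < p) : qPoch q (q ^ n)⁻¹ p = 0 :=
  prod_eq_zero (mem_range.2 h) <| by rw [inv_mul_cancel₀ (pow_ne_zero n hq0), sub_self]

theorem qPoch_inv_pow_add (hq0 : q ≠ 0) (hq : ¬IsOfFinOrder q) (p k : ℕ) :
    qPoch q (q ^ (p + k))⁻¹ p =
      (-1) ^ p * q ^ p.choose 2 * (q ^ ((p + k) * p))⁻¹ * (qPoch q q (p + k) / qPoch q q k) := by
  induction p with
  | zero => simp [qPoch_zero, div_self (qPoch_self_ne_zero hq k)]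
  | succ p ih =>
    have hshift : (q ^ (p + 1 + k))⁻¹ * q = (q ^ (p + k))⁻¹ := by field_simp; ring
    rw [qPoch_succ', hshift, ih, show p + 1 + k = p + k + 1 by ring, qPoch_self_succ,
      Nat.choose_succ_succ' p 1, Nat.choose_one_right]
    field_simp
    ring

end QPochhammer

section GaussianCoefficients

variable {q : ℂ}

/-- The Gaussian coefficient `[j + k choose j]_q`, indexed symmetrically by its two complementary
lower indices. -/
noncomputable def gaussCoeff (q : ℂ) (j k : ℕ) : ℂ :=
  qPoch q q (j + k) / (qPoch q q j * qPoch q q k)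

theorem qBinom_eq_gaussCoeff (hq : ¬IsOfFinOrder q) {n k : ℤ} {a b : ℕ} (hn : n = a + b)
    (hk : k = b) : qBinom q n k = gaussCoeff q a b := by
  subst hn hk
  have hnum : ∀ j : ℕ, q ^ ((a : ℤ) + b - b + j + 1) = q ^ (a + 1) * q ^ j := fun j ↦ by
    rw [← pow_add, ← zpow_natCast]; congr 1; push_cast; ring
  have hden : ∀ j : ℕ, q ^ ((j : ℤ) + 1) = q * q ^ j := fun j ↦ by
    rw [← pow_succ']; exact_mod_cast zpow_natCast q (j + 1)
  rw [qBinom, if_pos (by omega), Int.toNat_natCast, prod_div_distrib, gaussCoeff]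
  simp only [hnum, hden]
  change qPoch q (q ^ (a + 1)) b / qPoch q q b = _
  rw [qPoch_pow_succ hq, div_div]

theorem qBinom_of_neg (q : ℂ) {n k : ℤ} (hk : k < 0) : qBinom q n k = 0 :=
  if_neg fun h ↦ hk.not_ge h.1

theorem sum_gaussCoeff_pascal (hq : ¬IsOfFinOrder q) (f : ℕ → ℕ → ℂ) (n : ℕ) :
    ∑ p ∈ antidiagonal (n + 1), gaussCoeff q p.1 p.2 * f p.1 p.2 =
      ∑ p ∈ antidiagonal n,
        gaussCoeff q p.1 p.2 * (f (p.1 + 1) p.2 + q ^ p.1 * f p.1 (p.2 + 1)) := by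
  have hne := one_sub_pow_succ_ne_zero hq
  have hfst : ∀ j k, gaussCoeff q j (k + 1) * f j (k + 1) * (q ^ j * (1 - q ^ (k + 1))) /
      (1 - q ^ (j + k + 1)) = gaussCoeff q j k * (q ^ j * f j (k + 1)) := fun j k ↦ by
    have := hne k; have := hne (j + k)
    rw [gaussCoeff, gaussCoeff, ← add_assoc, qPoch_self_succ, qPoch_self_succ]
    field_simp
  have hsnd : ∀ j k, gaussCoeff q (j + 1) k * f (j + 1) k * (1 - q ^ (j + 1)) /
      (1 - q ^ (j + k + 1)) = gaussCoeff q j k * f (j + 1) k := fun j k ↦ by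
    have := hne j; have := hne (j + k)
    rw [gaussCoeff, gaussCoeff, add_right_comm, qPoch_self_succ, qPoch_self_succ]
    field_simp
  have hsplit : ∀ p ∈ antidiagonal (n + 1), gaussCoeff q p.1 p.2 * f p.1 p.2 =
      gaussCoeff q p.1 p.2 * f p.1 p.2 * (1 - q ^ p.1) / (1 - q ^ (n + 1)) +
        gaussCoeff q p.1 p.2 * f p.1 p.2 * (q ^ p.1 * (1 - q ^ p.2)) / (1 - q ^ (n + 1)) :=
    fun p hp ↦ by
      have hn := hne n
      rw [← HasAntidiagonal.mem_antidiagonal.1 hp] at hn ⊢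
      field_simp
      ring
  rw [sum_congr rfl hsplit, sum_add_distrib, Nat.sum_antidiagonal_succ,
    Nat.sum_antidiagonal_succ' (f := fun p ↦
      gaussCoeff q p.1 p.2 * f p.1 p.2 * (q ^ p.1 * (1 - q ^ p.2)) / (1 - q ^ (n + 1)))]
  simp only [pow_zero, sub_self, mul_zero, zero_div, zero_add, ← sum_add_distrib]
  refine sum_congr rfl fun p hp ↦ ?_
  rw [← HasAntidiagonal.mem_antidiagonal.1 hp, hfst, hsnd, mul_add]

/-- The coefficient `(q⁻ⁿ)_d q^d / (q)_d` of a terminating basic hypergeometric series. -/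
noncomputable def terminatingCoeff (q : ℂ) (n d : ℕ) : ℂ :=
  qPoch q (q ^ n)⁻¹ d * q ^ d / qPoch q q d

theorem terminatingCoeff_zero_right (q : ℂ) (n : ℕ) : terminatingCoeff q n 0 = 1 := by
  simp [terminatingCoeff, qPoch_zero]

theorem terminatingCoeff_of_lt (hq0 : q ≠ 0) {n d : ℕ} (h : n < d) :
    terminatingCoeff q n d = 0 := by
  rw [terminatingCoeff, qPoch_inv_pow_of_lt hq0 h, zero_mul, zero_div]

theorem terminatingCoeff_succ_succ (hq0 : q ≠ 0) (hq : ¬IsOfFinOrder q) (n d : ℕ) :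
    terminatingCoeff q (n + 1) (d + 1) =
      terminatingCoeff q n (d + 1) - (q ^ n)⁻¹ * terminatingCoeff q n d := by
  have hshift : (q ^ (n + 1))⁻¹ * q = (q ^ n)⁻¹ := by field_simp; ring
  have := one_sub_pow_succ_ne_zero hq d
  simp only [terminatingCoeff]
  rw [qPoch_succ' q (q ^ (n + 1))⁻¹, hshift, qPoch_succ q (q ^ n)⁻¹, qPoch_self_succ]
  field_simp
  ring

theorem sum_terminatingCoeff_succ (hq0 : q ≠ 0) (hq : ¬IsOfFinOrder q) (f : ℕ → ℂ) (n : ℕ) :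
    ∑ d ∈ range (n + 2), terminatingCoeff q (n + 1) d * f d =
      ∑ d ∈ range (n + 1), terminatingCoeff q n d * (f d - (q ^ n)⁻¹ * f (d + 1)) := by
  have hlast : ∑ d ∈ range (n + 1), terminatingCoeff q n d * f d =
      ∑ d ∈ range (n + 1), terminatingCoeff q n (d + 1) * f (d + 1) + f 0 := by
    rw [← add_zero (∑ d ∈ range (n + 1), terminatingCoeff q n d * f d),
      ← zero_mul (f (n + 1)), ← terminatingCoeff_of_lt hq0 n.lt_succ_self, ← sum_range_succ,
      sum_range_succ', terminatingCoeff_zero_right, one_mul]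
  simp only [mul_sub, sum_sub_distrib, hlast]
  rw [sum_range_succ', terminatingCoeff_zero_right, one_mul, add_sub_right_comm,
    ← sum_sub_distrib]
  congr 1
  refine sum_congr rfl fun d _ ↦ ?_
  rw [terminatingCoeff_succ_succ hq0 hq]
  ring

/-- Both sides `X` satisfy `X (n + 1) = X n - (1 - w) * ∑ [j + k choose j] (C)_{j+1} w^j C^k`. -/
theorem sum_terminatingCoeff_eq_sum_gaussCoeff (hq0 : q ≠ 0) (hq : ¬IsOfFinOrder q) (n : ℕ)
    (C w : ℂ) :
    ∑ d ∈ range (n + 1), terminatingCoeff q n d * (qPoch q C d * qPoch q w d) =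
      ∑ p ∈ antidiagonal n, gaussCoeff q p.1 p.2 * (qPoch q C p.1 * w ^ p.1 * C ^ p.2) := by
  induction n generalizing C w with
  | zero => simp [terminatingCoeff_zero_right, qPoch_zero, gaussCoeff]
  | succ n ih =>
    have hleft : ∀ d, (q ^ n)⁻¹ * (qPoch q C (d + 1) * qPoch q w (d + 1)) =
        (q ^ n)⁻¹ * (1 - C) * (1 - w) * (qPoch q (C * q) d * qPoch q (w * q) d) := fun d ↦ by
      rw [qPoch_succ', qPoch_succ' q w]; ring
    have hright : ∀ j k, qPoch q C (j + 1) * w ^ (j + 1) * C ^ k +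
          q ^ j * (qPoch q C j * w ^ j * C ^ (k + 1)) =
        qPoch q C j * w ^ j * C ^ k - (1 - w) * (qPoch q C (j + 1) * w ^ j * C ^ k) :=
      fun j k ↦ by rw [qPoch_succ]; ring
    have hshift : ∀ p ∈ antidiagonal n, gaussCoeff q p.1 p.2 *
          ((1 - w) * (qPoch q C (p.1 + 1) * w ^ p.1 * C ^ p.2)) =
        (q ^ n)⁻¹ * (1 - C) * (1 - w) *
          (gaussCoeff q p.1 p.2 * (qPoch q (C * q) p.1 * (w * q) ^ p.1 * (C * q) ^ p.2)) :=
      fun p hp ↦ by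
        rw [← HasAntidiagonal.mem_antidiagonal.1 hp, qPoch_succ']
        field_simp
        ring
    rw [sum_terminatingCoeff_succ hq0 hq, sum_gaussCoeff_pascal hq
      (fun j k ↦ qPoch q C j * w ^ j * C ^ k)]
    simp only [hleft, hright, mul_sub (terminatingCoeff _ _ _), mul_sub (gaussCoeff _ _ _),
      sum_sub_distrib, ih C w, sum_congr rfl hshift, ← mul_sum,
      ← ih (C * q) (w * q), mul_left_comm _ ((q ^ n)⁻¹ * (1 - C) * (1 - w))]

theorem sum_gaussCoeff_mul_qPoch (hq0 : q ≠ 0) (hq : ¬IsOfFinOrder q) (n : ℕ) (C : ℂ) :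
    ∑ p ∈ antidiagonal n, gaussCoeff q p.1 p.2 * (qPoch q C p.1 * C ^ p.2) = 1 := by
  have h := sum_terminatingCoeff_eq_sum_gaussCoeff hq0 hq n C 1
  rw [sum_range_succ'] at h
  simpa [qPoch_succ' q 1, qPoch_zero, terminatingCoeff_zero_right] using h.symm

end GaussianCoefficients

section BaileyPairs

variable {q : ℂ}

/-- The kernel `(q⁻ⁿ)_p (qⁿ⁺²)_p qᵖ` (the case `c = 0`) through which Bailey pairs relative to `q²`
are inverted. The shifts `c` and `l` are those that summation over one index of `U_t` produces. -/
noncomputable def baileyKernel (q : ℂ) (c n l p : ℕ) : ℂ :=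
  qPoch q (q ^ n)⁻¹ p * qPoch q (q ^ (2 * c + n + 2)) p * q ^ (p + c * l)

/-- A Bailey pair relative to `a = q²`. The usual denominators are `(q)_{N-M} (aq)_{N+M}`; here
the constant `(1 - q) (1 - q²)` completing `(aq)_{N+M}` to `(q)_{N+M+2}` is absorbed in `α`. -/
def IsBaileyPair (q : ℂ) (α β : ℕ → ℂ) : Prop :=
  ∀ N, β N = ∑ p ∈ antidiagonal N, α p.1 / (qPoch q q p.2 * qPoch q q (p.2 + 2 * p.1 + 2))

theorem sum_range_bailey_orthogonality (hq : ¬IsOfFinOrder q) (b : ℕ) {n m : ℕ} (hm : m ≤ n) :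
    (1 - q ^ n) * ∑ i ∈ range (m + 1), (-1) ^ i * q ^ i.choose 2 * (1 - q ^ (b + 1 + 2 * i)) *
        qPoch q q (b + i) /
          (qPoch q q i * qPoch q q (n - i) * qPoch q q (n - i + b + 1 + 2 * i)) =
      (-1) ^ m * q ^ (m + 1).choose 2 * qPoch q q (b + 1 + m) * (1 - q ^ (n - m)) /
        (qPoch q q m * qPoch q q (n - m) * qPoch q q (n + b + 1 + m)) := by
  induction m with
  | zero =>
    simp only [zero_add, sum_range_one, pow_zero, Nat.choose_zero_succ, mul_zero, add_zero, one_mul,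
      qPoch_zero, tsub_zero, Nat.choose_succ_self, qPoch_self_succ]
    field_simp
  | succ m ih =>
    obtain ⟨r, rfl⟩ := Nat.exists_eq_add_of_le hm
    have hsub : m + 1 + r - m = r + 1 := by omega
    rw [sum_range_succ, mul_add, ih (by omega), hsub, Nat.add_sub_cancel_left,
      Nat.choose_succ_succ' (m + 1), Nat.choose_one_right,
      show r + b + 1 + 2 * (m + 1) = m + 1 + r + b + 1 + m + 1 by ring,
      show m + 1 + r + b + 1 + (m + 1) = m + 1 + r + b + 1 + m + 1 by ring,
      show b + (m + 1) = b + 1 + m by ring, show b + 1 + (m + 1) = b + 1 + m + 1 by ring,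
      qPoch_self_succ q (m + 1 + r + b + 1 + m), qPoch_self_succ q r, qPoch_self_succ q m,
      qPoch_self_succ q (b + 1 + m)]
    have := one_sub_pow_succ_ne_zero hq m; have := one_sub_pow_succ_ne_zero hq r
    have := one_sub_pow_succ_ne_zero hq (m + 1 + r + b + 1 + m)
    field_simp
    ring

theorem bailey_orthogonality (hq : ¬IsOfFinOrder q) (b n : ℕ) :
    ∑ p ∈ antidiagonal n, (-1) ^ p.1 * q ^ p.1.choose 2 * (1 - q ^ (b + 1 + 2 * p.1)) *
        qPoch q q (b + p.1) /
          (qPoch q q p.1 * qPoch q q p.2 * qPoch q q (p.2 + b + 1 + 2 * p.1)) =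
      if n = 0 then 1 else 0 := by
  obtain rfl | n := n
  · have := qPoch_self_ne_zero hq b; have := one_sub_pow_succ_ne_zero hq b
    simp only [HasAntidiagonal.antidiagonal_zero, sum_singleton, pow_zero, Nat.choose_zero_succ,
      mul_zero, add_zero, zero_add, one_mul, qPoch_zero, qPoch_self_succ, if_true]
    field_simp
  · rw [Nat.sum_antidiagonal_eq_sum_range_succ_mk, if_neg n.succ_ne_zero]
    refine (mul_eq_zero.1 ?_).resolve_left (one_sub_pow_succ_ne_zero hq n)
    rw [sum_range_bailey_orthogonality hq b le_rfl]
    simp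

theorem choose_two_add_choose_two (i k : ℕ) :
    (i + k).choose 2 + k.choose 2 + k = i.choose 2 + (i + k) * k := by
  induction k with
  | zero => rfl
  | succ k ih =>
    rw [← add_assoc i k 1, Nat.choose_succ_succ' (i + k) 1, Nat.choose_succ_succ' k 1,
      Nat.choose_one_right, Nat.choose_one_right]
    linarith

theorem baileyKernel_zero_add (hq0 : q ≠ 0) (hq : ¬IsOfFinOrder q) (K i : ℕ) :
    (-1) ^ (K + i) * q ^ (K + i).choose 2 * (1 - q ^ (2 * (K + i) + 2)) * (1 - q ^ (K + i + 1)) *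
        baileyKernel q 0 (K + i) 0 K =
      (-1) ^ i * q ^ i.choose 2 * (1 - q ^ (2 * K + 1 + 1 + 2 * i)) * qPoch q q (2 * K + 1 + i) /
        qPoch q q i := by
  have hsign : (-1 : ℂ) ^ (K + i) * (-1) ^ K = (-1) ^ i := by
    rw [pow_add, mul_right_comm, ← mul_pow]; simp
  have hpow : q ^ (K + i).choose 2 * q ^ K.choose 2 * q ^ K =
      q ^ i.choose 2 * q ^ ((K + i) * K) := by
    simp only [← pow_add, add_comm K i, choose_two_add_choose_two]
  rw [baileyKernel, qPoch_inv_pow_add hq0 hq, show 2 * 0 + (K + i) + 2 = K + i + 1 + 1 by ring,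
    qPoch_pow_succ hq, show K + i + 1 + K = 2 * K + 1 + i by ring, qPoch_self_succ q (K + i)]
  have := qPoch_self_ne_zero hq (K + i)
  have := one_sub_pow_succ_ne_zero hq (K + i)
  calc
    _ = ((-1) ^ (K + i) * (-1) ^ K) * (q ^ (K + i).choose 2 * q ^ K.choose 2 * q ^ K) *
          (q ^ ((K + i) * K))⁻¹ * (1 - q ^ (2 * (K + i) + 2)) *
          (qPoch q q (K + i) / qPoch q q i) * ((1 - q ^ (K + i + 1)) *
          (qPoch q q (2 * K + 1 + i) / (qPoch q q (K + i) * (1 - q ^ (K + i + 1))))) := by ring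
    _ = _ := by
      rw [hsign, hpow]
      field_simp
      ring

theorem isBaileyPair_of_inversion (hq0 : q ≠ 0) (hq : ¬IsOfFinOrder q) (β : ℕ → ℂ) :
    IsBaileyPair q
      (fun M ↦ (-1) ^ M * q ^ M.choose 2 * (1 - q ^ (2 * M + 2)) * (1 - q ^ (M + 1)) *
        ∑ K ∈ range (M + 1), baileyKernel q 0 M 0 K * β K) β := by
  intro N
  have hterm : ∀ p ∈ antidiagonal N, ((-1) ^ p.1 * q ^ p.1.choose 2 * (1 - q ^ (2 * p.1 + 2)) *
      (1 - q ^ (p.1 + 1)) * ∑ K ∈ range (p.1 + 1), baileyKernel q 0 p.1 0 K * β K) /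
        (qPoch q q p.2 * qPoch q q (p.2 + 2 * p.1 + 2)) =
      ∑ r ∈ antidiagonal p.1, β r.1 * ((-1) ^ r.2 * q ^ r.2.choose 2 *
        (1 - q ^ (2 * r.1 + 1 + 1 + 2 * r.2)) * qPoch q q (2 * r.1 + 1 + r.2) /
          (qPoch q q r.2 * qPoch q q p.2 *
            qPoch q q (p.2 + (2 * r.1 + 1) + 1 + 2 * r.2))) := fun p _ ↦ by
    rw [← Nat.sum_antidiagonal_eq_sum_range_succ (fun K _ ↦ baileyKernel q 0 p.1 0 K * β K),
      mul_sum, sum_div]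
    refine sum_congr rfl fun r hr ↦ ?_
    rw [← HasAntidiagonal.mem_antidiagonal.1 hr, ← mul_assoc, baileyKernel_zero_add hq0 hq,
      show p.2 + 2 * (r.1 + r.2) + 2 = p.2 + (2 * r.1 + 1) + 1 + 2 * r.2 by ring]
    field_simp
  rw [sum_congr rfl hterm, sum_antidiagonal_assoc (fun K i n ↦ β K * ((-1) ^ i * q ^ i.choose 2 *
        (1 - q ^ (2 * K + 1 + 1 + 2 * i)) * qPoch q q (2 * K + 1 + i) /
          (qPoch q q i * qPoch q q n * qPoch q q (n + (2 * K + 1) + 1 + 2 * i))))]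
  simp only [← mul_sum, bailey_orthogonality hq]
  rw [Nat.sum_antidiagonal_eq_sum_range_succ (fun K m ↦ β K * if m = 0 then 1 else 0),
    sum_range_succ, sum_eq_zero fun K hK ↦ by simp [(Nat.sub_pos_of_lt (mem_range.1 hK)).ne']]
  simp

end BaileyPairs

section InfiniteProducts

open Filter Topology

variable {q : ℂ}

theorem not_isOfFinOrder_of_norm_lt_one (hq1 : ‖q‖ < 1) : ¬IsOfFinOrder q :=
  fun h ↦ hq1.ne h.norm_eq_one

theorem summable_norm_mul_pow (hq1 : ‖q‖ < 1) (a : ℂ) : Summable fun n ↦ ‖a * q ^ n‖ :=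
  ((summable_geometric_of_lt_one (norm_nonneg q) hq1).mul_left ‖a‖).congr fun n ↦ by
    rw [norm_mul, norm_pow]

theorem multipliable_one_sub_mul_pow (hq1 : ‖q‖ < 1) (a : ℂ) :
    Multipliable fun n ↦ 1 - a * q ^ n := by
  simpa only [sub_eq_add_neg] using multipliable_one_add_of_summable
    (by simpa only [norm_neg] using summable_norm_mul_pow hq1 a)

theorem tendsto_qPoch (hq1 : ‖q‖ < 1) (a : ℂ) :
    Tendsto (qPoch q a) atTop (𝓝 (qPochInf q a)) :=
  (multipliable_one_sub_mul_pow hq1 a).tendsto_prod_tprod_nat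

theorem qPochInf_ne_zero (hq1 : ‖q‖ < 1) {a : ℂ} (ha : ∀ n, 1 - a * q ^ n ≠ 0) :
    qPochInf q a ≠ 0 := by
  simpa only [qPochInf, sub_eq_add_neg] using tprod_one_add_ne_zero_of_summable
    (by simpa only [sub_eq_add_neg] using ha)
    (by simpa only [norm_neg] using summable_norm_mul_pow hq1 a)

theorem qPochInf_self_ne_zero (hq1 : ‖q‖ < 1) : qPochInf q q ≠ 0 :=
  qPochInf_ne_zero hq1 (one_sub_self_mul_pow_ne_zero (not_isOfFinOrder_of_norm_lt_one hq1))

theorem qPochInf_eq_qPoch_mul (hq1 : ‖q‖ < 1) (a : ℂ) (n : ℕ) :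
    qPochInf q a = qPoch q a n * qPochInf q (a * q ^ n) := by
  refine tendsto_nhds_unique ((tendsto_qPoch hq1 a).comp (tendsto_add_atTop_nat n)) ?_
  simpa only [Function.comp_def, add_comm _ n, qPoch_add] using
    (tendsto_qPoch hq1 (a * q ^ n)).const_mul (qPoch q a n)

theorem exists_norm_qPoch_le (hq1 : ‖q‖ < 1) (a : ℂ) : ∃ B, ∀ n, ‖qPoch q a n‖ ≤ B :=
  let ⟨B, hB⟩ := (tendsto_qPoch hq1 a).norm.bddAbove_range
  ⟨B, fun n ↦ hB ⟨n, rfl⟩⟩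

theorem exists_norm_inv_qPoch_le (hq1 : ‖q‖ < 1) {a : ℂ} (ha : ∀ n, 1 - a * q ^ n ≠ 0) :
    ∃ B, ∀ n, ‖(qPoch q a n)⁻¹‖ ≤ B :=
  let ⟨B, hB⟩ := ((tendsto_qPoch hq1 a).inv₀ (qPochInf_ne_zero hq1 ha)).norm.bddAbove_range
  ⟨B, fun n ↦ hB ⟨n, rfl⟩⟩

end InfiniteProducts

section QGauss

open Filter Topology

variable {q : ℂ}

theorem sum_range_qGauss (hq : ¬IsOfFinOrder q) {a b : ℂ}
    (hab : ∀ n, 1 - a * b * q * q ^ n ≠ 0) (N : ℕ) :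
    ∑ n ∈ range (N + 1), qPoch q a n * qPoch q b n / (qPoch q q n * qPoch q (a * b * q) n) * q ^ n =
      qPoch q (a * q) N * qPoch q (b * q) N / (qPoch q q N * qPoch q (a * b * q) N) := by
  set c := a * b * q with hc
  induction N with
  | zero => simp [qPoch_zero]
  | succ N ih =>
    have := hab N
    have := one_sub_pow_succ_ne_zero hq N
    rw [sum_range_succ, ih, qPoch_succ' q a, qPoch_succ' q b, qPoch_self_succ,
      qPoch_succ q c, qPoch_succ q (a * q), qPoch_succ q (b * q)]
    field_simp
    rw [hc]
    ring

theorem hasSum_qGauss (hq1 : ‖q‖ < 1) {a b : ℂ} (hab : ∀ n, 1 - a * b * q * q ^ n ≠ 0) :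
    HasSum
      (fun n ↦ qPoch q a n * qPoch q b n / (qPoch q q n * qPoch q (a * b * q) n) * q ^ n)
      (qPochInf q (a * q) * qPochInf q (b * q) / (qPochInf q q * qPochInf q (a * b * q))) := by
  have hq := not_isOfFinOrder_of_norm_lt_one hq1
  have hne := mul_ne_zero (qPochInf_self_ne_zero hq1) (qPochInf_ne_zero hq1 hab)
  have hratio : Tendsto
      (fun n ↦ qPoch q a n * qPoch q b n / (qPoch q q n * qPoch q (a * b * q) n)) atTop
      (𝓝 (qPochInf q a * qPochInf q b / (qPochInf q q * qPochInf q (a * b * q)))) :=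
    ((tendsto_qPoch hq1 a).mul (tendsto_qPoch hq1 b)).div
      ((tendsto_qPoch hq1 q).mul (tendsto_qPoch hq1 (a * b * q))) hne
  obtain ⟨B, hB⟩ := hratio.norm.bddAbove_range
  have hsummable : Summable fun n ↦
      qPoch q a n * qPoch q b n / (qPoch q q n * qPoch q (a * b * q) n) * q ^ n :=
    .of_norm_bounded ((summable_geometric_of_lt_one (norm_nonneg q) hq1).mul_left B) fun n ↦ by
      rw [norm_mul, norm_pow]
      exact mul_le_mul_of_nonneg_right (hB ⟨n, rfl⟩) (by positivity)
  rw [hsummable.hasSum_iff_tendsto_nat, ← tendsto_add_atTop_iff_nat 1]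
  simp only [sum_range_qGauss hq hab]
  exact ((tendsto_qPoch hq1 (a * q)).mul (tendsto_qPoch hq1 (b * q))).div
    ((tendsto_qPoch hq1 q).mul (tendsto_qPoch hq1 (a * b * q))) hne

end QGauss

section BaileyLemma

variable {q : ℂ}

theorem hasSum_sum_antidiagonal {α : Type*} [AddCommMonoid α] [TopologicalSpace α] [ContinuousAdd α]
    [RegularSpace α] {f : ℕ × ℕ → α} {s : α} (hf : HasSum f s) :
    HasSum (fun n ↦ ∑ p ∈ antidiagonal n, f p) s :=
  (HasAntidiagonal.sigmaAntidiagonalEquivProd.hasSum_iff.2 hf).sigma fun n ↦ by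
    simpa only [Function.comp_def, HasAntidiagonal.sigmaAntidiagonalEquivProd_apply,
      sum_coe_sort] using hasSum_fintype fun p : antidiagonal n ↦ f p

/-- The factor of the summand of `U_t` that depends on the last index `k_t = N + 1` alone. -/
noncomputable def uWeight (q x : ℂ) (N : ℕ) : ℂ :=
  qPoch q (x * q) N * qPoch q (q / x) N * q ^ (N + 1)

theorem exists_norm_uWeight_le (hq1 : ‖q‖ < 1) (x : ℂ) :
    ∃ B, ∀ N, ‖uWeight q x N‖ ≤ B * ‖q‖ ^ N := by
  obtain ⟨B₁, h₁⟩ := exists_norm_qPoch_le hq1 (x * q)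
  obtain ⟨B₂, h₂⟩ := exists_norm_qPoch_le hq1 (q / x)
  refine ⟨B₁ * B₂ * ‖q‖, fun N ↦ ?_⟩
  have hB₁ : 0 ≤ B₁ := (norm_nonneg _).trans (h₁ 0)
  calc ‖uWeight q x N‖
      = ‖qPoch q (x * q) N‖ * ‖qPoch q (q / x) N‖ * ‖q‖ ^ (N + 1) := by
        rw [uWeight, norm_mul, norm_mul, norm_pow]
    _ ≤ B₁ * B₂ * ‖q‖ ^ (N + 1) := by gcongr; exacts [h₁ N, h₂ N]
    _ = B₁ * B₂ * ‖q‖ * ‖q‖ ^ N := by ring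

theorem summable_uWeight_mul (hq1 : ‖q‖ < 1) (x : ℂ) {α : ℕ → ℂ}
    (hα : Summable fun M ↦ ‖α M * q ^ M‖) :
    Summable fun p : ℕ × ℕ ↦
      uWeight q x (p.1 + p.2) * (α p.1 / (qPoch q q p.2 * qPoch q q (p.2 + 2 * p.1 + 2))) := by
  have hne := one_sub_self_mul_pow_ne_zero (not_isOfFinOrder_of_norm_lt_one hq1)
  obtain ⟨B, hB⟩ := exists_norm_uWeight_le hq1 x
  obtain ⟨D, hD⟩ := exists_norm_inv_qPoch_le hq1 hne
  have hD0 : 0 ≤ D := (norm_nonneg _).trans (hD 0)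
  have hB0 : 0 ≤ B := by simpa using (norm_nonneg _).trans (hB 0)
  refine .of_norm_bounded ((hα.mul_of_nonneg (summable_geometric_of_lt_one (norm_nonneg q) hq1)
    (fun _ ↦ norm_nonneg _) fun _ ↦ by positivity).mul_left (B * (D * D))) fun p ↦ ?_
  calc
    _ = ‖uWeight q x (p.1 + p.2)‖ *
          (‖α p.1‖ * (‖(qPoch q q p.2)⁻¹‖ * ‖(qPoch q q (p.2 + 2 * p.1 + 2))⁻¹‖)) := by
        rw [div_eq_mul_inv, mul_inv, norm_mul, norm_mul, norm_mul]
    _ ≤ B * ‖q‖ ^ (p.1 + p.2) * (‖α p.1‖ * (D * D)) := by gcongr; exacts [hB _, hD _, hD _]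
    _ = _ := by rw [norm_mul, norm_pow]; ring

theorem hasSum_uWeight_add (hq1 : ‖q‖ < 1) {x : ℂ} (hx : x ≠ 0) (M : ℕ) (c : ℂ)
    (h₁ : 1 - x * q ^ (M + 1) ≠ 0) (h₂ : 1 - q ^ (M + 1) / x ≠ 0) :
    HasSum (fun n ↦ uWeight q x (M + n) * (c / (qPoch q q n * qPoch q q (n + 2 * M + 2))))
      (qPochInf q (x * q) * qPochInf q (q / x) / qPochInf q q ^ 2 *
        (c * q ^ (M + 1) / ((1 - x * q ^ (M + 1)) * (1 - q ^ (M + 1) / x)))) := by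
  have hq := not_isOfFinOrder_of_norm_lt_one hq1
  have habq : x * q ^ (M + 1) * (q ^ (M + 1) / x) * q = q * q ^ (2 * M + 2) := by
    field_simp; ring
  have hab : ∀ n, 1 - x * q ^ (M + 1) * (q ^ (M + 1) / x) * q * q ^ n ≠ 0 := fun n ↦ by
    rw [habq, ← pow_succ', ← pow_add, show 2 * M + 2 + 1 + n = 2 * M + 2 + n + 1 by ring]
    exact one_sub_pow_succ_ne_zero hq _
  have hInf : ∀ a, 1 - a * q ^ M ≠ 0 →
      qPochInf q (a * q ^ M * q) * qPoch q a M = qPochInf q a / (1 - a * q ^ M) := fun a ha ↦ by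
    rw [eq_div_iff ha, qPochInf_eq_qPoch_mul hq1 a (M + 1), qPoch_succ, pow_succ, mul_assoc a]
    ring
  have hxM : x * q ^ (M + 1) = x * q * q ^ M := by ring
  have hxM' : q ^ (M + 1) / x = q / x * q ^ M := by ring
  have hxpoch := hInf (x * q) (hxM ▸ h₁)
  have hxpoch' := hInf (q / x) (hxM' ▸ h₂)
  convert! (hasSum_qGauss hq1 hab).mul_left
    (qPoch q (x * q) M * qPoch q (q / x) M * q ^ (M + 1) * c / qPoch q q (2 * M + 2)) using 1
  · funext n
    rw [habq, show n + 2 * M + 2 = 2 * M + 2 + n by ring, uWeight, hxM, hxM']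
    simp only [qPoch_add]
    ring
  · have hqInf := qPochInf_eq_qPoch_mul hq1 q (2 * M + 2)
    rw [habq, hxM, hxM']
    symm
    calc
      _ = (qPochInf q (x * q * q ^ M * q) * qPoch q (x * q) M) *
            (qPochInf q (q / x * q ^ M * q) * qPoch q (q / x) M) * (c * q ^ (M + 1)) /
            (qPochInf q q * (qPoch q q (2 * M + 2) * qPochInf q (q * q ^ (2 * M + 2)))) := by ring
      _ = _ := by
        rw [hxpoch, hxpoch', ← hqInf, div_mul_div_comm]
        generalize (1 - x * q * q ^ M) * (1 - q / x * q ^ M) = d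
        ring

theorem IsBaileyPair.tsum_uWeight_mul {α β : ℕ → ℂ} (h : IsBaileyPair q α β) (hq1 : ‖q‖ < 1)
    {x : ℂ} (hx : x ≠ 0) (hα : Summable fun M ↦ ‖α M * q ^ M‖)
    (h₁ : ∀ M, 1 - x * q ^ (M + 1) ≠ 0) (h₂ : ∀ M, 1 - q ^ (M + 1) / x ≠ 0) :
    ∑' N, uWeight q x N * β N =
      qPochInf q (x * q) * qPochInf q (q / x) / qPochInf q q ^ 2 *
        ∑' M, α M * q ^ (M + 1) / ((1 - x * q ^ (M + 1)) * (1 - q ^ (M + 1) / x)) := by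
  have hsum := (summable_uWeight_mul hq1 x hα).hasSum
  have hrow := hsum.prod_fiberwise fun M ↦ hasSum_uWeight_add hq1 hx M (α M) (h₁ M) (h₂ M)
  rw [← tsum_mul_left, hrow.tsum_eq, ← (hasSum_sum_antidiagonal hsum).tsum_eq]
  refine tsum_congr fun N ↦ ?_
  rw [h N, mul_sum]
  refine sum_congr rfl fun p hp ↦ ?_
  rw [HasAntidiagonal.mem_antidiagonal.1 hp]

end BaileyLemma

section TransferOperator

variable {q : ℂ}

/-- Summation over one index of the multisum `U_t`, for index shift `p = k - 1` and truncated at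
`b < m`. The state `l` carries the sum `1 + ∑ (2 pⱼ + 1)` over the earlier indices on which the
upper entry of the Gaussian binomial depends. -/
noncomputable def transfer (q : ℂ) (m : ℕ) : (ℕ → ℕ → ℂ) →ₗ[ℂ] ℕ → ℕ → ℂ where
  toFun f l p :=
    q ^ (p + 1) ^ 2 * ∑ b ∈ range m, qBinom q (l + p + b) (b - p) * f (l + 2 * p + 1) b
  map_add' f g := by
    funext l p
    simp only [Pi.add_apply, mul_add, sum_add_distrib]
  map_smul' c f := by
    funext l p
    simp only [Pi.smul_apply, smul_eq_mul, mul_left_comm _ c, ← mul_sum, RingHom.id_apply]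

theorem transfer_apply (q : ℂ) (m : ℕ) (f : ℕ → ℕ → ℂ) (l p : ℕ) :
    transfer q m f l p =
      q ^ (p + 1) ^ 2 * ∑ b ∈ range m, qBinom q (l + p + b) (b - p) * f (l + 2 * p + 1) b :=
  rfl

/-- The coefficients of the upper triangular action of `transfer` on the Bailey kernels. -/
noncomputable def transferCoeff (q : ℂ) (c d e : ℕ) : ℂ :=
  gaussCoeff q d e * qPoch q (q ^ (2 * c + d + e + 2)) d *
    q ^ ((d + e + 1) * (e + 1) + c * (2 * e + 1))

theorem baileyKernel_of_lt (hq0 : q ≠ 0) {n p : ℕ} (h : n < p) (c l : ℕ) :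
    baileyKernel q c n l p = 0 := by
  rw [baileyKernel, qPoch_inv_pow_of_lt hq0 h, zero_mul, zero_mul]

theorem transfer_baileyKernel_of_lt (hq0 : q ≠ 0) {n p : ℕ} (h : n < p) (m c l : ℕ) :
    transfer q m (baileyKernel q c n) l p = 0 := by
  rw [transfer_apply, sum_eq_zero, mul_zero]
  intro b _
  obtain hb | hb := lt_or_ge b p
  · rw [qBinom_of_neg q (by omega), zero_mul]
  · rw [baileyKernel_of_lt hq0 (h.trans_le hb), mul_zero]

theorem qBinom_mul_baileyKernel (hq0 : q ≠ 0) (hq : ¬IsOfFinOrder q) (c l p k d : ℕ) :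
    qBinom q (l + p + (p + d : ℕ)) ((p + d : ℕ) - p) *
        baileyKernel q c (p + k) (l + 2 * p + 1) (p + d) =
      qPoch q (q ^ (p + k))⁻¹ p * qPoch q (q ^ (2 * c + (p + k) + 2)) p *
          q ^ (p + c * (l + 2 * p + 1)) *
        (terminatingCoeff q k d *
          (qPoch q (q ^ (2 * c + (p + k) + 2 + p)) d * qPoch q (q ^ (l + 2 * p + 1)) d)) := by
  have hinv : (q ^ (p + k))⁻¹ * q ^ p = (q ^ k)⁻¹ := by field_simp; ring
  have hB : q ^ (2 * c + (p + k) + 2) * q ^ p = q ^ (2 * c + (p + k) + 2 + p) :=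
    (pow_add _ _ _).symm
  rw [qBinom_eq_gaussCoeff hq (a := l + 2 * p) (b := d) (by push_cast; ring) (by push_cast; ring),
    baileyKernel, qPoch_add, qPoch_add, hinv, hB, gaussCoeff, terminatingCoeff,
    qPoch_pow_succ hq (l + 2 * p)]
  field_simp
  ring

theorem transferCoeff_mul_baileyKernel (hq0 : q ≠ 0) (hq : ¬IsOfFinOrder q) (c l p j k : ℕ) :
    transferCoeff q c j (p + k) * baileyKernel q (c + j) (p + k) l p =
      q ^ (p + 1) ^ 2 * (qPoch q (q ^ (p + (j + k)))⁻¹ p *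
        qPoch q (q ^ (2 * c + (p + (j + k)) + 2)) p * q ^ (p + c * (l + 2 * p + 1)) *
          (gaussCoeff q j k * (qPoch q (q ^ (2 * c + (p + (j + k)) + 2 + p)) j *
            (q ^ (l + 2 * p + 1)) ^ j * (q ^ (2 * c + (p + (j + k)) + 2 + p)) ^ k))) := by
  set B := q ^ (2 * c + (p + (j + k)) + 2) with hB
  have hBp : q ^ (2 * c + (p + (j + k)) + 2 + p) = B * q ^ p := pow_add _ _ _
  have hBj : q ^ (2 * (c + j) + (p + k) + 2) = B * q ^ j := by rw [hB]; ring
  have hcomm : qPoch q B j * qPoch q (B * q ^ j) p = qPoch q B p * qPoch q (B * q ^ p) j := by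
    rw [← qPoch_add, ← qPoch_add, add_comm]
  have := qPoch_self_ne_zero hq (p + k)
  rw [transferCoeff, baileyKernel, show 2 * c + j + (p + k) + 2 = 2 * c + (p + (j + k)) + 2 by ring,
    ← hB, hBj, hBp, qPoch_inv_pow_add hq0 hq, qPoch_inv_pow_add hq0 hq, gaussCoeff, gaussCoeff,
    show j + (p + k) = p + (j + k) by ring]
  calc
    _ = (qPoch q B j * qPoch q (B * q ^ j) p) * ((-1) ^ p * q ^ p.choose 2) *
          (qPoch q q (p + (j + k)) / (qPoch q q j * qPoch q q k)) *
          (q ^ ((p + (j + k) + 1) * (p + k + 1) + c * (2 * (p + k) + 1) + p + (c + j) * l) *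
            (q ^ ((p + k) * p))⁻¹) := by
      field_simp
      ring
    _ = (qPoch q B p * qPoch q (B * q ^ p) j) * ((-1) ^ p * q ^ p.choose 2) *
          (qPoch q q (p + (j + k)) / (qPoch q q j * qPoch q q k)) *
          (q ^ ((p + 1) ^ 2 + p + c * (l + 2 * p + 1) + (l + 2 * p + 1) * j +
            (2 * c + (p + (j + k)) + 2 + p) * k) * (q ^ ((p + (j + k)) * p))⁻¹) := by
      rw [hcomm]
      congr 1
      field_simp
      ring
    _ = _ := by
      have := qPoch_self_ne_zero hq (j + k)
      rw [hB]
      field_simp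
      ring

theorem transfer_baileyKernel (hq0 : q ≠ 0) (hq : ¬IsOfFinOrder q) (c : ℕ) {n m : ℕ}
    (hnm : n < m) :
    transfer q m (baileyKernel q c n) =
      ∑ r ∈ antidiagonal n, transferCoeff q c r.1 r.2 • baileyKernel q (c + r.1) r.2 := by
  funext l p
  simp only [Finset.sum_apply, Pi.smul_apply, smul_eq_mul]
  obtain hp | hp := lt_or_ge n p
  · rw [transfer_baileyKernel_of_lt hq0 hp, sum_eq_zero]
    intro r hr
    rw [baileyKernel_of_lt hq0 ((HasAntidiagonal.antidiagonal.snd_le hr).trans_lt hp), mul_zero]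
  obtain ⟨k, rfl⟩ := Nat.exists_eq_add_of_le hp
  rw [sum_antidiagonal_add_of_snd_lt (f := fun d e ↦
      transferCoeff q c d e * baileyKernel q (c + d) e l p)
      fun d e he ↦ by rw [baileyKernel_of_lt hq0 he, mul_zero],
    transfer_apply, sum_range_eq_of_lt hnm fun b hb ↦ by rw [baileyKernel_of_lt hq0 hb, mul_zero],
    add_assoc, sum_range_add, sum_eq_zero fun b hb ↦ by
      rw [qBinom_of_neg q (by have := mem_range.1 hb; omega), zero_mul], zero_add]
  simp only [qBinom_mul_baileyKernel hq0 hq]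
  rw [← mul_sum, sum_terminatingCoeff_eq_sum_gaussCoeff hq0 hq, mul_sum, mul_sum]
  refine sum_congr rfl fun r hr ↦ ?_
  rw [transferCoeff_mul_baileyKernel hq0 hq, HasAntidiagonal.mem_antidiagonal.1 hr]

end TransferOperator

section Eigen

variable {q : ℂ}

/-- The eigenvalues of `transfer`, indexed so that the kernels with parameter `c` involve those with
parameters `c + i`. -/
noncomputable def transferEigenvalue (q : ℂ) (c k : ℕ) : ℂ :=
  q ^ ((k + 1) ^ 2 + c * (2 * k + 1))

/-- The value at `(0, 0)` of the component of `baileyKernel q c (i + k)` in the eigenspace of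
`transfer` for `transferEigenvalue q (c + i) k`. -/
noncomputable def eigenCoeff (q : ℂ) (c i k : ℕ) : ℂ :=
  (-1) ^ k * q ^ (k.choose 2 + k * (2 * c + i + 2)) * (1 - q ^ (2 * c + 2 * i + 1)) *
    qPoch q q (2 * c + i) * qPoch q q (i + k) / (qPoch q q i * qPoch q q (2 * c + i + k + 1))

theorem sum_alternating_qPoch_div (hq : ¬IsOfFinOrder q) (b n : ℕ) :
    ∑ p ∈ antidiagonal n, (-1) ^ p.2 * q ^ (p.2.choose 2 + p.2 * (b + p.1 + 2)) *
        (1 - q ^ (b + 2 * p.1 + 1)) * qPoch q q (b + p.1) / qPoch q q p.1 =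
      qPoch q q (b + n + 1) / qPoch q q n := by
  induction n with
  | zero => simp [qPoch_zero, qPoch_self_succ, mul_comm]
  | succ n ih =>
    have hstep : ∀ p ∈ antidiagonal n,
        (-1) ^ (p.2 + 1) * q ^ ((p.2 + 1).choose 2 + (p.2 + 1) * (b + p.1 + 2)) *
          (1 - q ^ (b + 2 * p.1 + 1)) * qPoch q q (b + p.1) / qPoch q q p.1 =
        -q ^ (b + n + 2) * ((-1) ^ p.2 * q ^ (p.2.choose 2 + p.2 * (b + p.1 + 2)) *
          (1 - q ^ (b + 2 * p.1 + 1)) * qPoch q q (b + p.1) / qPoch q q p.1) := fun p hp ↦ by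
      rw [← HasAntidiagonal.mem_antidiagonal.1 hp, Nat.choose_succ_succ' p.2 1,
        Nat.choose_one_right]
      ring
    rw [Nat.sum_antidiagonal_succ', sum_congr rfl hstep, ← mul_sum, ih,
      show b + (n + 1) = b + n + 1 by ring, qPoch_self_succ q (b + n + 1), qPoch_self_succ q n]
    have := one_sub_pow_succ_ne_zero hq n
    simp only [pow_zero, Nat.choose_zero_succ, zero_mul, add_zero]
    field_simp
    ring

theorem sum_eigenCoeff (hq : ¬IsOfFinOrder q) (c n : ℕ) :
    ∑ p ∈ antidiagonal n, eigenCoeff q c p.1 p.2 = 1 := by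
  have hterm : ∀ p ∈ antidiagonal n, eigenCoeff q c p.1 p.2 =
      (-1) ^ p.2 * q ^ (p.2.choose 2 + p.2 * (2 * c + p.1 + 2)) *
        (1 - q ^ (2 * c + 2 * p.1 + 1)) * qPoch q q (2 * c + p.1) / qPoch q q p.1 *
          (qPoch q q n / qPoch q q (2 * c + n + 1)) := fun p hp ↦ by
    rw [← HasAntidiagonal.mem_antidiagonal.1 hp, eigenCoeff, mul_div_mul_comm,
      ← add_assoc (2 * c) p.1 p.2]
  have := qPoch_self_ne_zero hq n
  have := qPoch_self_ne_zero hq (2 * c + n + 1)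
  rw [sum_congr rfl hterm, ← sum_mul, sum_alternating_qPoch_div hq]
  field_simp

theorem transferCoeff_mul_eigenCoeff (hq : ¬IsOfFinOrder q) (c d j k : ℕ) :
    transferCoeff q c d (j + k) * eigenCoeff q (c + d) j k =
      transferEigenvalue q (c + (d + j)) k * eigenCoeff q c (d + j) k *
        (gaussCoeff q d j *
          (qPoch q (q ^ (2 * c + (d + j) + 1)) d * (q ^ (2 * c + (d + j) + 1)) ^ j)) := by
  have hP := qPoch_self_ne_zero hq
  have h₁ := hP (j + k)
  have h₂ := hP (d + j)
  have h₃ := hP (2 * c + (d + j))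
  have h₄ := hP (2 * c + d + (j + k) + 1 + d)
  rw [transferCoeff, eigenCoeff, eigenCoeff, transferEigenvalue, gaussCoeff, gaussCoeff,
    qPoch_pow_succ hq, qPoch_pow_succ hq,
    show 2 * (c + d) + j = 2 * c + (d + j) + d by ring,
    show 2 * c + (d + j) + d + k + 1 = 2 * c + d + (j + k) + 1 + d by ring,
    show 2 * c + (d + j) + k + 1 = 2 * c + d + (j + k) + 1 by ring, ← add_assoc d j k]
  field_simp
  ring

theorem sum_transferCoeff_mul_eigenCoeff (hq0 : q ≠ 0) (hq : ¬IsOfFinOrder q) (c i k : ℕ) :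
    ∑ p ∈ antidiagonal i, transferCoeff q c p.1 (p.2 + k) * eigenCoeff q (c + p.1) p.2 k =
      transferEigenvalue q (c + i) k * eigenCoeff q c i k := by
  have hterm : ∀ p ∈ antidiagonal i,
      transferCoeff q c p.1 (p.2 + k) * eigenCoeff q (c + p.1) p.2 k =
        transferEigenvalue q (c + i) k * eigenCoeff q c i k * (gaussCoeff q p.1 p.2 *
          (qPoch q (q ^ (2 * c + i + 1)) p.1 * (q ^ (2 * c + i + 1)) ^ p.2)) := fun p hp ↦ by
    rw [transferCoeff_mul_eigenCoeff hq, HasAntidiagonal.mem_antidiagonal.1 hp]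
  rw [sum_congr rfl hterm, ← mul_sum, sum_gaussCoeff_mul_qPoch hq0 hq, mul_one]

theorem transfer_pow_baileyKernel (hq0 : q ≠ 0) (hq : ¬IsOfFinOrder q) (t c : ℕ) {n m : ℕ}
    (hnm : n < m) :
    (transfer q m ^ t) (baileyKernel q c n) 0 0 =
      ∑ p ∈ antidiagonal n, transferEigenvalue q (c + p.1) p.2 ^ t * eigenCoeff q c p.1 p.2 := by
  induction t generalizing c n with
  | zero => simp [sum_eigenCoeff hq, baileyKernel, qPoch_zero]
  | succ t ih =>
    calc (transfer q m ^ (t + 1)) (baileyKernel q c n) 0 0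
        = ∑ r ∈ antidiagonal n, transferCoeff q c r.1 r.2 *
            (transfer q m ^ t) (baileyKernel q (c + r.1) r.2) 0 0 := by
          rw [pow_succ, Module.End.mul_apply, transfer_baileyKernel hq0 hq c hnm]
          simp only [map_sum, map_smul, Finset.sum_apply, Pi.smul_apply, smul_eq_mul]
      _ = ∑ r ∈ antidiagonal n, ∑ p ∈ antidiagonal r.2, transferCoeff q c r.1 (p.1 + p.2) *
            (transferEigenvalue q (c + (r.1 + p.1)) p.2 ^ t * eigenCoeff q (c + r.1) p.1 p.2) := by
          refine sum_congr rfl fun r hr ↦ ?_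
          rw [ih _ ((HasAntidiagonal.antidiagonal.snd_le hr).trans_lt hnm), mul_sum]
          refine sum_congr rfl fun p hp ↦ ?_
          rw [HasAntidiagonal.mem_antidiagonal.1 hp, add_assoc]
      _ = ∑ p ∈ antidiagonal n, ∑ r ∈ antidiagonal p.1, transferCoeff q c r.1 (r.2 + p.2) *
            (transferEigenvalue q (c + (r.1 + r.2)) p.2 ^ t * eigenCoeff q (c + r.1) r.2 p.2) :=
          (sum_antidiagonal_assoc (fun d j k ↦ transferCoeff q c d (j + k) *
            (transferEigenvalue q (c + (d + j)) k ^ t * eigenCoeff q (c + d) j k)) n).symm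
      _ = _ := by
          refine sum_congr rfl fun p _ ↦ ?_
          rw [pow_succ, mul_assoc, ← sum_transferCoeff_mul_eigenCoeff hq0 hq, mul_sum]
          refine sum_congr rfl fun r hr ↦ ?_
          rw [HasAntidiagonal.mem_antidiagonal.1 hr, mul_left_comm]

end Eigen

section Multisum

variable {q : ℂ}

/-- The product of the weights of consecutive indices in `U_t`, for shifted indices `p = k - 1`;
`l = 1` is the case occurring in `U_t` and other `l` arise after splitting off the first indices. -/
noncomputable def chainWeight (q : ℂ) {t : ℕ} (l : ℕ) (p : Fin (t + 1) → ℕ) : ℂ :=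
  ∏ i : Fin t, q ^ (p i.castSucc + 1) ^ 2 *
    qBinom q (l + i + 2 * ∑ j with j < i.castSucc, (p j : ℤ) + p i.castSucc + p i.succ)
      (p i.succ - p i.castSucc)

theorem chainWeight_cons (q : ℂ) {t : ℕ} (l a : ℕ) (p : Fin (t + 1) → ℕ) :
    chainWeight q l (Fin.cons a p : Fin (t + 2) → ℕ) =
      q ^ (a + 1) ^ 2 * qBinom q (l + a + p 0) (p 0 - a) * chainWeight q (l + 2 * a + 1) p := by
  rw [chainWeight, Fin.prod_univ_succ]
  congr 1
  · simp
  · refine prod_congr rfl fun i _ ↦ ?_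
    simp only [← Fin.succ_castSucc, Fin.cons_succ, sum_filter, Fin.sum_univ_succ, Fin.cons_zero,
      Fin.succ_pos, Fin.succ_lt_succ_iff, if_true, Fin.val_succ]
    congr 2
    push_cast
    ring

theorem chainWeight_eq_zero (q : ℂ) {t : ℕ} (l : ℕ) {p : Fin (t + 1) → ℕ} (hp : ¬Monotone p) :
    chainWeight q l p = 0 := by
  simp only [Fin.monotone_iff_le_succ, not_forall, not_le] at hp
  obtain ⟨i, hi⟩ := hp
  exact prod_eq_zero (mem_univ i) (by rw [qBinom_of_neg q (by omega), mul_zero])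

theorem UtProd_eq_chainWeight (q : ℂ) (t : ℕ) (p : Fin (t + 1) → ℕ) :
    UtProd q t (fun i ↦ p i + 1) = chainWeight q 1 p := by
  refine prod_congr rfl fun i _ ↦ ?_
  have hcard : #{j : Fin (t + 1) | (j : ℕ) < i} = i := by
    rw [Fin.card_filter_val_lt, min_eq_right (by omega)]
  simp only [Nat.cast_add, Nat.cast_one, sum_add_distrib, sum_const, hcard, nsmul_one,
    Fin.lt_def, Fin.val_castSucc]
  congr 2 <;> ring

theorem sum_piFinset_succ {α M : Type*} [AddCommMonoid M] (n : ℕ) (s : Finset α)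
    (f : (Fin (n + 1) → α) → M) :
    ∑ p ∈ Fintype.piFinset (fun _ : Fin (n + 1) ↦ s), f p =
      ∑ a ∈ s, ∑ p ∈ Fintype.piFinset (fun _ : Fin n ↦ s), f (Fin.cons a p) := by
  rw [← sum_product']
  refine (sum_equiv (Fin.consEquiv fun _ ↦ α) (fun p ↦ ?_) fun p _ ↦ rfl).symm
  simp [Fin.forall_fin_succ, Fin.consEquiv]

theorem sum_chainWeight_mul (q : ℂ) (m t l : ℕ) (g h : ℕ → ℂ) :
    ∑ p ∈ Fintype.piFinset (fun _ : Fin (t + 1) ↦ range m),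
        h (p 0) * (chainWeight q l p * g (p (Fin.last t))) =
      ∑ a ∈ range m, h a * (transfer q m ^ t) (fun _ ↦ g) l a := by
  induction t generalizing l h with
  | zero => simp [sum_piFinset_succ, chainWeight]
  | succ t ih =>
    rw [sum_piFinset_succ]
    refine sum_congr rfl fun a _ ↦ ?_
    have hterm (p : Fin (t + 1) → ℕ) : chainWeight q l (Fin.cons a p : Fin (t + 2) → ℕ) *
        g (p (Fin.last t)) = q ^ (a + 1) ^ 2 * (qBinom q (l + a + p 0) (p 0 - a) *
          (chainWeight q (l + 2 * a + 1) p * g (p (Fin.last t)))) := by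
      rw [chainWeight_cons]
      ring
    simp only [Fin.cons_zero, ← Fin.succ_last, Fin.cons_succ, hterm, ← mul_sum]
    rw [ih _ fun b ↦ qBinom q (l + a + b) (b - a), pow_succ' (transfer q m), Module.End.mul_apply,
      transfer_apply]

/-- The inner sum of `U_t` over all tuples with last index `k_t = N + 1`; only finitely many terms
are nonzero. -/
noncomputable def chainSum (q : ℂ) (t N : ℕ) : ℂ :=
  ∑' p : {p : Fin (t + 1) → ℕ // p (Fin.last t) = N}, chainWeight q 1 p.1

theorem chainSum_eq_sum (q : ℂ) (t : ℕ) {N m : ℕ} (h : N < m) :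
    chainSum q t N = ∑ p ∈ Fintype.piFinset (fun _ : Fin (t + 1) ↦ range m) with
      p (Fin.last t) = N, chainWeight q 1 p := by
  classical
  refine (tsum_subtype {p : Fin (t + 1) → ℕ | p (Fin.last t) = N} (chainWeight q 1)).trans ?_
  rw [tsum_eq_sum (s := Fintype.piFinset fun _ ↦ range m) fun p hp ↦ ?_, sum_filter]
  · exact sum_congr rfl fun p _ ↦ Set.indicator_apply _ _ _
  · refine Set.indicator_apply_eq_zero.2 fun hN ↦ chainWeight_eq_zero q 1 fun hmono ↦ hp ?_
    exact Fintype.mem_piFinset.2 fun i ↦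
      mem_range.2 (((hmono (Fin.le_last i)).trans_eq hN).trans_lt h)

theorem transfer_pow_const (hq : ¬IsOfFinOrder q) (m t : ℕ) (g : ℕ → ℂ) :
    (transfer q m ^ (t + 1)) (fun _ ↦ g) 0 0 = q * ∑ N ∈ range m, g N * chainSum q t N := by
  have hstart (b : ℕ) : qBinom q b b = 1 := by
    rw [qBinom_eq_gaussCoeff hq (a := 0) (b := b) (by simp) (by simp), gaussCoeff]
    simp [qPoch_zero, qPoch_self_ne_zero hq]
  calc (transfer q m ^ (t + 1)) (fun _ ↦ g) 0 0
      = q * ∑ p ∈ Fintype.piFinset (fun _ : Fin (t + 1) ↦ range m),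
          chainWeight q 1 p * g (p (Fin.last t)) := by
        rw [pow_succ', Module.End.mul_apply, transfer_apply]
        simpa [hstart] using congrArg (q * ·) (sum_chainWeight_mul q m t 1 g 1).symm
    _ = q * ∑ N ∈ range m, ∑ p ∈ Fintype.piFinset (fun _ : Fin (t + 1) ↦ range m) with
          p (Fin.last t) = N, chainWeight q 1 p * g (p (Fin.last t)) := by
        rw [← sum_fiberwise_of_maps_to fun p hp ↦ Fintype.mem_piFinset.1 hp (Fin.last t)]
    _ = q * ∑ N ∈ range m, g N * chainSum q t N := by
        congr 1
        refine sum_congr rfl fun N hN ↦ ?_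
        rw [chainSum_eq_sum q t (mem_range.1 hN), mul_sum]
        refine sum_congr rfl fun p hp ↦ ?_
        rw [(mem_filter.1 hp).2, mul_comm]

end Multisum

section HeckeCoefficients

variable {q : ℂ}

/-- The monomials of the Hecke-type double sum: up to the factor `q ^ (-T)`, the term of the triple
sum at `(r, s, u) = (k, k + 2i + 1, 0)` is `-heckeCoeff q T i k` and the term at
`(k + 2i + 1, k, 0)` is `heckeCoeff q T i k * q ^ (2i + 1)`. -/
noncomputable def heckeCoeff (q : ℂ) (T i k : ℕ) : ℂ :=
  (-1) ^ i * q ^ ((i + 1).choose 2 + k * (k + 2 * i + 2)) * transferEigenvalue q i k ^ T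

/-- The sequence forming a Bailey pair with `chainSum`. -/
noncomputable def heckeAlpha (q : ℂ) (t M : ℕ) : ℂ :=
  (1 - q ^ (2 * M + 2)) * (q ^ (M + 1))⁻¹ *
    ∑ p ∈ antidiagonal M, heckeCoeff q (t + 1) p.1 p.2 * (1 - q ^ (2 * p.1 + 1))

theorem eigenCoeff_zero_eq_heckeCoeff (hq0 : q ≠ 0) (hq : ¬IsOfFinOrder q) (T i k : ℕ) :
    (-1) ^ (i + k) * q ^ (i + k).choose 2 * (1 - q ^ (i + k + 1)) *
        (q⁻¹ * (transferEigenvalue q i k ^ T * eigenCoeff q 0 i k)) =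
      (q ^ (i + k + 1))⁻¹ * (heckeCoeff q T i k * (1 - q ^ (2 * i + 1))) := by
  have hsign : (-1 : ℂ) ^ (i + k) * (-1) ^ k = (-1) ^ i := by
    rw [pow_add, mul_assoc, ← mul_pow]
    norm_num
  have hchoose : (i + k).choose 2 + k.choose 2 + k * (i + 2) + (i + k) =
      (i + 1).choose 2 + k * (k + 2 * i + 2) := by
    rw [Nat.choose_succ_succ' i 1, Nat.choose_one_right]
    linarith [choose_two_add_choose_two i k]
  have h₁ := qPoch_self_ne_zero hq i
  have h₂ := qPoch_self_ne_zero hq (i + k)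
  have h₃ := one_sub_pow_succ_ne_zero hq (i + k)
  rw [eigenCoeff, heckeCoeff, ← hchoose, mul_zero, zero_add, zero_add,
    qPoch_self_succ]
  field_simp
  linear_combination q ^ (i + k).choose 2 * q ^ (i + k + 1) * transferEigenvalue q i k ^ T *
    q ^ (k.choose 2 + k * (i + 2)) * (1 - q ^ (2 * i + 1)) * hsign

theorem isBaileyPair_chainSum (hq0 : q ≠ 0) (hq : ¬IsOfFinOrder q) (t : ℕ) :
    IsBaileyPair q (heckeAlpha q t) (chainSum q t) := by
  convert isBaileyPair_of_inversion hq0 hq (chainSum q t) using 2 with M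
  have hconst : baileyKernel q 0 M = fun _ ↦ baileyKernel q 0 M 0 := by
    funext l p
    simp [baileyKernel]
  have hkernel : ∑ K ∈ range (M + 1), baileyKernel q 0 M 0 K * chainSum q t K =
      q⁻¹ * ∑ p ∈ antidiagonal M, transferEigenvalue q p.1 p.2 ^ (t + 1) *
        eigenCoeff q 0 p.1 p.2 := by
    rw [eq_inv_mul_iff_mul_eq₀ hq0, ← transfer_pow_const hq, ← hconst,
      transfer_pow_baileyKernel hq0 hq _ _ M.lt_succ_self]
    simp only [zero_add]
  rw [hkernel, heckeAlpha, mul_sum, mul_sum, mul_sum]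
  refine sum_congr rfl fun p hp ↦ ?_
  rw [← HasAntidiagonal.mem_antidiagonal.1 hp, mul_assoc,
    ← eigenCoeff_zero_eq_heckeCoeff hq0 hq]
  ring

theorem summable_heckeCoeff (hq1 : ‖q‖ < 1) (t : ℕ) :
    Summable fun p : ℕ × ℕ ↦ heckeCoeff q (t + 1) p.1 p.2 := by
  have hgeom := summable_geometric_of_lt_one (norm_nonneg q) hq1
  refine .of_norm_bounded (hgeom.mul_of_nonneg hgeom (fun _ ↦ by positivity) fun _ ↦ by positivity)
    fun ⟨i, k⟩ ↦ ?_
  rw [heckeCoeff, transferEigenvalue, mul_assoc, ← pow_mul, ← pow_add, norm_mul, norm_pow, norm_neg,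
    norm_one, one_pow, one_mul, norm_pow, ← pow_add]
  refine pow_le_pow_of_le_one (norm_nonneg q) hq1.le ?_
  nlinarith [Nat.zero_le ((i + 1).choose 2), Nat.zero_le (t * ((k + 1) ^ 2 + i * (2 * k + 1)))]

theorem summable_heckeCoeff_mul (hq1 : ‖q‖ < 1) (t : ℕ) :
    Summable fun p : ℕ × ℕ ↦ heckeCoeff q (t + 1) p.1 p.2 * q ^ (2 * p.1 + 1) :=
  .of_norm_bounded (summable_heckeCoeff hq1 t).norm fun p ↦ by
    rw [norm_mul, norm_pow]
    exact mul_le_of_le_one_right (norm_nonneg _) (pow_le_one₀ (norm_nonneg q) hq1.le)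

theorem summable_heckeCoeff_mul_one_sub (hq1 : ‖q‖ < 1) (t : ℕ) :
    Summable fun p : ℕ × ℕ ↦ heckeCoeff q (t + 1) p.1 p.2 * (1 - q ^ (2 * p.1 + 1)) := by
  simpa only [mul_one_sub] using (summable_heckeCoeff hq1 t).sub (summable_heckeCoeff_mul hq1 t)

theorem summable_norm_heckeAlpha_mul_pow (hq0 : q ≠ 0) (hq1 : ‖q‖ < 1) (t : ℕ) :
    Summable fun M ↦ ‖heckeAlpha q t M * q ^ M‖ := by
  have hdiag := (hasSum_sum_antidiagonal (summable_heckeCoeff_mul_one_sub hq1 t).hasSum).summable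
  refine .of_nonneg_of_le (fun _ ↦ norm_nonneg _) (fun M ↦ ?_) (hdiag.norm.mul_left (2 * ‖q‖⁻¹))
  have hle : ‖1 - q ^ (2 * M + 2)‖ ≤ 2 := by
    refine (norm_sub_le _ _).trans ?_
    rw [norm_one, norm_pow]
    linarith [pow_le_one₀ (n := 2 * M + 2) (norm_nonneg q) hq1.le]
  have heq : heckeAlpha q t M * q ^ M = (1 - q ^ (2 * M + 2)) * q⁻¹ *
      ∑ p ∈ antidiagonal M, heckeCoeff q (t + 1) p.1 p.2 * (1 - q ^ (2 * p.1 + 1)) := by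
    rw [heckeAlpha, pow_succ q M]
    field_simp
  rw [heq, norm_mul, norm_mul, norm_inv]
  gcongr

end HeckeCoefficients

section Summability

variable {q : ℂ}

theorem exists_norm_qBinom_le (hq1 : ‖q‖ < 1) : ∃ B, ∀ n k, ‖qBinom q n k‖ ≤ B := by
  have hq := not_isOfFinOrder_of_norm_lt_one hq1
  obtain ⟨B, hB⟩ := exists_norm_qPoch_le hq1 q
  obtain ⟨B', hB'⟩ := exists_norm_inv_qPoch_le hq1 (one_sub_self_mul_pow_ne_zero hq)
  have hB0 : 0 ≤ B := (norm_nonneg _).trans (hB 0)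
  have hB'0 : 0 ≤ B' := (norm_nonneg _).trans (hB' 0)
  refine ⟨B * (B' * B'), fun n k ↦ ?_⟩
  by_cases h : 0 ≤ k ∧ k ≤ n
  · rw [qBinom_eq_gaussCoeff hq (a := (n - k).toNat) (b := k.toNat) (by omega) (by omega),
      gaussCoeff, div_eq_mul_inv, mul_inv, norm_mul, norm_mul]
    gcongr
    exacts [hB _, hB' _, hB' _]
  · rw [qBinom, if_neg h, norm_zero]
    positivity

theorem summable_prod_pow {r : ℝ} (hr0 : 0 ≤ r) (hr1 : r < 1) (n : ℕ) :
    Summable fun p : Fin n → ℕ ↦ ∏ i, r ^ p i := by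
  induction n with
  | zero => exact .of_finite
  | succ n ih =>
    rw [← (Fin.consEquiv fun _ ↦ ℕ).summable_iff]
    refine ((summable_geometric_of_lt_one hr0 hr1).mul_of_nonneg ih (fun _ ↦ by positivity)
      fun _ ↦ by positivity).congr fun p ↦ ?_
    simp [Fin.consEquiv, Fin.prod_univ_succ]

theorem exists_norm_chainWeight_le (hq1 : ‖q‖ < 1) (t l : ℕ) :
    ∃ B, ∀ p : Fin (t + 1) → ℕ, ‖chainWeight q l p‖ ≤ B * ∏ i : Fin t, ‖q‖ ^ p i.castSucc := by
  obtain ⟨B, hB⟩ := exists_norm_qBinom_le hq1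
  refine ⟨B ^ t, fun p ↦ ?_⟩
  calc ‖chainWeight q l p‖ ≤ ∏ i : Fin t, B * ‖q‖ ^ p i.castSucc := by
        rw [chainWeight, norm_prod]
        refine prod_le_prod (fun _ _ ↦ norm_nonneg _) fun i _ ↦ ?_
        rw [norm_mul, norm_pow, mul_comm]
        refine mul_le_mul (hB _ _) (pow_le_pow_of_le_one (norm_nonneg q) hq1.le ?_) (by positivity)
          ((norm_nonneg _).trans (hB 0 0))
        nlinarith
    _ = B ^ t * ∏ i : Fin t, ‖q‖ ^ p i.castSucc := by
        rw [prod_mul_distrib, prod_const, card_univ, Fintype.card_fin]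

theorem summable_uWeight_mul_chainWeight (hq1 : ‖q‖ < 1) (x : ℂ) (t l : ℕ) :
    Summable fun p : Fin (t + 1) → ℕ ↦ uWeight q x (p (Fin.last t)) * chainWeight q l p := by
  obtain ⟨B, hB⟩ := exists_norm_uWeight_le hq1 x
  obtain ⟨C, hC⟩ := exists_norm_chainWeight_le hq1 t l
  refine .of_norm_bounded ((summable_prod_pow (norm_nonneg q) hq1 (t + 1)).mul_left (B * C))
    fun p ↦ ?_
  rw [norm_mul, Fin.prod_univ_castSucc]
  exact (mul_le_mul (hB _) (hC p) (norm_nonneg _) ((norm_nonneg _).trans (hB _))).trans_eq (by ring)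

theorem hasSum_uWeight_mul_chainSum (hq1 : ‖q‖ < 1) (x : ℂ) (t : ℕ) :
    HasSum (fun p : Fin (t + 1) → ℕ ↦ uWeight q x (p (Fin.last t)) * chainWeight q 1 p)
      (∑' N, uWeight q x N * chainSum q t N) := by
  have hs := summable_uWeight_mul_chainWeight hq1 x t 1
  convert hs.hasSum using 1
  rw [← (hs.hasSum.tsum_fiberwise fun p ↦ p (Fin.last t)).tsum_eq]
  refine tsum_congr fun N ↦ ?_
  rw [chainSum, ← tsum_mul_left]
  exact tsum_congr fun p ↦ by rw [show p.1 (Fin.last t) = N from p.2]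

/-- The index tuples of `U_t`. -/
abbrev UtIndex (t : ℕ) : Type :=
  {k : Fin (t + 1) → ℕ // (∀ i : Fin t, k i.castSucc ≤ k i.succ) ∧ 1 ≤ k 0}

theorem hasSum_UtTerm (hq1 : ‖q‖ < 1) (x : ℂ) (t : ℕ) :
    HasSum (fun k : UtIndex t ↦ UtTerm q x t k.1) (∑' N, uWeight q x N * chainSum q t N) := by
  have hpos (k : UtIndex t) (i : Fin (t + 1)) : 1 ≤ k.1 i :=
    k.2.2.trans (Fin.monotone_iff_le_succ.2 k.2.1 i.zero_le)
  have hshift (k : UtIndex t) : (fun i ↦ k.1 i - 1 + 1) = k.1 :=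
    funext fun i ↦ Nat.sub_add_cancel (hpos k i)
  have hinj : Function.Injective fun (k : UtIndex t) i ↦ k.1 i - 1 := fun k k' h ↦
    Subtype.ext <| by rw [← hshift k, ← hshift k']; exact congrArg (fun p i ↦ p i + 1) h
  convert (hinj.hasSum_iff fun p hp ↦ ?_).2 (hasSum_uWeight_mul_chainSum hq1 x t) using 2 with k
  · rw [Function.comp_apply, ← UtProd_eq_chainWeight, hshift, UtTerm, uWeight,
      Nat.sub_add_cancel (hpos k _)]
  · rw [chainWeight_eq_zero q 1 fun hmono ↦ hp ⟨⟨fun i ↦ p i + 1, ?_⟩, rfl⟩, mul_zero]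
    exact ⟨fun i ↦ Nat.succ_le_succ (hmono i.castSucc_le_succ), Nat.succ_pos _⟩

end Summability

section HeckeSeries

variable {q : ℂ}

theorem hasSum_mul_pow_geometric {ι : Type*} {a y : ι → ℂ} {ρ : ℝ} (ha : Summable a) (hρ : ρ < 1)
    (hy : ∀ i, ‖y i‖ ≤ ρ) (v : ℕ) :
    HasSum (fun p : ι × ℕ ↦ a p.1 * y p.1 ^ (p.2 + v)) (∑' i, a i * (y i ^ v / (1 - y i))) := by
  have hy1 (i : ι) : ‖y i‖ < 1 := (hy i).trans_lt hρ
  have hfib (i : ι) : HasSum (fun u ↦ a i * y i ^ (u + v)) (a i * (y i ^ v / (1 - y i))) := by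
    simpa only [pow_add, mul_comm _ (y i ^ v), div_eq_mul_inv] using
      ((hasSum_geometric_of_norm_lt_one (hy1 i)).mul_left (y i ^ v)).mul_left (a i)
  have hs : Summable fun p : ι × ℕ ↦ a p.1 * y p.1 ^ (p.2 + v) := by
    by_cases hι : IsEmpty ι
    · exact .of_finite
    have hρ0 : 0 ≤ ρ := (norm_nonneg _).trans (hy (not_isEmpty_iff.1 hι).some)
    refine .of_norm_bounded (ha.norm.mul_of_nonneg (summable_geometric_of_lt_one hρ0 hρ)
      (fun _ ↦ norm_nonneg _) fun _ ↦ by positivity) fun p ↦ ?_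
    rw [norm_mul, norm_pow, pow_add]
    gcongr
    exact (mul_le_of_le_one_right (by positivity) (pow_le_one₀ (norm_nonneg _) (hy1 _).le)).trans
      (pow_le_pow_left₀ (norm_nonneg _) (hy _) _)
  exact (hs.hasSum.prod_fiberwise hfib).tsum_eq ▸ hs.hasSum

theorem summable_mul_pow_div_one_sub {ι : Type*} {a y : ι → ℂ} {ρ : ℝ} (ha : Summable a)
    (hρ : ρ < 1) (hy : ∀ i, ‖y i‖ ≤ ρ) (v : ℕ) :
    Summable fun i ↦ a i * (y i ^ v / (1 - y i)) := by
  refine .of_norm_bounded (ha.norm.mul_right (1 - ρ)⁻¹) fun i ↦ ?_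
  have hsub : 1 - ρ ≤ ‖1 - y i‖ := by
    simpa using (sub_le_sub_left (hy i) ‖(1 : ℂ)‖).trans (norm_sub_norm_le 1 (y i))
  rw [norm_mul, div_eq_mul_inv, norm_mul, norm_pow, norm_inv]
  have hpow := pow_le_one₀ (n := v) (norm_nonneg _) ((hy i).trans hρ.le)
  have hinv := inv_anti₀ (sub_pos.2 hρ) hsub
  exact mul_le_mul_of_nonneg_left ((mul_le_of_le_one_left (by positivity) hpow).trans hinv)
    (norm_nonneg _)

/-- The index set of the first triple sum. -/
abbrev HeckeNonnegIndex : Type :=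
  {p : ℤ × ℤ × ℤ // (0 ≤ p.1 ∧ 0 ≤ p.2.1 ∧ 0 ≤ p.2.2) ∧ p.1 % 2 ≠ p.2.1 % 2}

/-- The index set of the second triple sum. -/
abbrev HeckeNegIndex : Type :=
  {p : ℤ × ℤ × ℤ // (p.1 < 0 ∧ p.2.1 < 0 ∧ p.2.2 < 0) ∧ p.1 % 2 ≠ p.2.1 % 2}

/-- The triples `((i, k), u)` parametrize the indices with `r < s` and those with `s < r`. -/
noncomputable def heckeNonnegEquiv : ((ℕ × ℕ) × ℕ) ⊕ ((ℕ × ℕ) × ℕ) ≃ HeckeNonnegIndex where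
  toFun := Sum.elim
    (fun p ↦ ⟨(p.1.2, p.1.2 + 2 * p.1.1 + 1, p.2), by dsimp only; omega⟩)
    (fun p ↦ ⟨(p.1.2 + 2 * p.1.1 + 1, p.1.2, p.2), by dsimp only; omega⟩)
  invFun p := if p.1.1 < p.1.2.1
    then .inl (((p.1.2.1 - p.1.1).toNat / 2, p.1.1.toNat), p.1.2.2.toNat)
    else .inr (((p.1.1 - p.1.2.1).toNat / 2, p.1.2.1.toNat), p.1.2.2.toNat)
  left_inv := by
    rintro (⟨⟨i, k⟩, u⟩ | ⟨⟨i, k⟩, u⟩)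
    · refine (if_pos (show (k : ℤ) < k + 2 * i + 1 by omega)).trans ?_
      simp only [Sum.elim_inl, Sum.inl.injEq, Prod.mk.injEq]
      omega
    · refine (if_neg (show ¬(k + 2 * i + 1 : ℤ) < k by omega)).trans ?_
      simp only [Sum.elim_inr, Sum.inr.injEq, Prod.mk.injEq]
      omega
  right_inv := by
    rintro ⟨⟨r, s, u⟩, ⟨hr, hs, hu⟩, hrs⟩
    dsimp only at hr hs hu hrs ⊢
    split_ifs <;> simp only [Sum.elim_inl, Sum.elim_inr, Subtype.mk.injEq, Prod.mk.injEq] <;> omega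

/-- The symmetry `(r, s, u) ↦ (-1 - s, -1 - r, -1 - u)` exchanging the two index sets. -/
def heckeReflection : HeckeNonnegIndex ≃ HeckeNegIndex where
  toFun p := ⟨(-1 - p.1.2.1, -1 - p.1.1, -1 - p.1.2.2), by dsimp only; omega⟩
  invFun p := ⟨(-1 - p.1.2.1, -1 - p.1.1, -1 - p.1.2.2), by dsimp only; omega⟩
  left_inv p := by ext <;> simp
  right_inv p := by ext <;> simp

theorem heckeTerm3_reflection (q x : ℂ) (T r s u : ℤ) :
    heckeTerm3 q x T (-1 - s, -1 - r, -1 - u) = heckeTerm3 q x⁻¹ T (r, s, u + 1) := by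
  have hsign : -1 - s - (-1 - r) - 1 = r - s - 1 := by ring
  simp only [heckeTerm3, inv_zpow', hsign]
  congr 3 <;> ring

theorem heckeTerm3_eq (q x : ℂ) {T r s u a E : ℤ} (ha : r - s - 1 = 2 * a)
    (hE : r ^ 2 + s ^ 2 + 2 * (4 * T + 3) * r * s + 4 * (2 + T) * r + 4 * T * s - 4 * T - 1 +
      4 * u * (r + s + 1) = 8 * E) :
    heckeTerm3 q x T (r, s, u) = (-1) ^ a * x ^ u * q ^ E := by
  simp only [heckeTerm3, ha, hE]
  rw [Int.mul_ediv_cancel_left _ two_ne_zero, Int.mul_ediv_cancel_left _ (by norm_num)]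

theorem cast_succ_choose_two_mul_two (i : ℕ) : ((i + 1).choose 2 : ℤ) * 2 = (i + 1) * i :=
  mod_cast (Nat.add_one_mul_choose_eq i 1).symm.trans (by rw [Nat.choose_one_right])

theorem heckeTerm3_of_lt (hq0 : q ≠ 0) (x : ℂ) (T i k u : ℕ) :
    heckeTerm3 q x T (k, k + 2 * i + 1, u) =
      -(q ^ (-(T : ℤ)) * (heckeCoeff q T i k * (x * q ^ (i + k + 1)) ^ u)) := by
  rw [heckeTerm3_eq q x (a := -(i + 1 : ℕ)) (E := -T + ((i + 1).choose 2 + k * (k + 2 * i + 2) +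
    ((k + 1) ^ 2 + i * (2 * k + 1)) * T + (i + k + 1) * u : ℕ))]
  · rw [zpow_add₀ hq0, zpow_neg, ← inv_zpow, zpow_natCast, zpow_natCast, zpow_natCast, heckeCoeff,
      transferEigenvalue, inv_neg_one]
    ring
  · push_cast
    ring
  · push_cast
    linear_combination -4 * cast_succ_choose_two_mul_two i

theorem heckeTerm3_of_gt (hq0 : q ≠ 0) (x : ℂ) (T i k u : ℕ) :
    heckeTerm3 q x T (k + 2 * i + 1, k, u) =
      q ^ (-(T : ℤ)) * (heckeCoeff q T i k * q ^ (2 * i + 1) * (x * q ^ (i + k + 1)) ^ u) := by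
  rw [heckeTerm3_eq q x (a := i) (E := -T + ((i + 1).choose 2 + k * (k + 2 * i + 2) +
    ((k + 1) ^ 2 + i * (2 * k + 1)) * T + (2 * i + 1) + (i + k + 1) * u : ℕ))]
  · rw [zpow_add₀ hq0, zpow_natCast, zpow_natCast, zpow_natCast, heckeCoeff, transferEigenvalue]
    ring
  · ring
  · push_cast
    linear_combination -4 * cast_succ_choose_two_mul_two i

/-- The double series left after summing one of the triple series over `u ≥ v`. -/
noncomputable def heckeSum (q x : ℂ) (T v : ℕ) : ℂ :=
  ∑' p : ℕ × ℕ, heckeCoeff q T p.1 p.2 * (1 - q ^ (2 * p.1 + 1)) *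
    ((x * q ^ (p.1 + p.2 + 1)) ^ v / (1 - x * q ^ (p.1 + p.2 + 1)))

theorem norm_mul_pow_succ_le (hq1 : ‖q‖ < 1) (x : ℂ) (n : ℕ) : ‖x * q ^ (n + 1)‖ ≤ ‖x * q‖ := by
  rw [pow_succ', ← mul_assoc, norm_mul, norm_pow]
  exact mul_le_of_le_one_right (norm_nonneg _) (pow_le_one₀ (norm_nonneg q) hq1.le)

theorem hasSum_heckeSum (hq1 : ‖q‖ < 1) {x : ℂ} (hx : ‖x * q‖ < 1) (t v : ℕ) :
    HasSum (fun p : ℕ × ℕ ↦ heckeCoeff q (t + 1) p.1 p.2 * (1 - q ^ (2 * p.1 + 1)) *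
      ((x * q ^ (p.1 + p.2 + 1)) ^ v / (1 - x * q ^ (p.1 + p.2 + 1)))) (heckeSum q x (t + 1) v) :=
  (summable_mul_pow_div_one_sub (summable_heckeCoeff_mul_one_sub hq1 t) hx
    (fun p ↦ norm_mul_pow_succ_le hq1 x (p.1 + p.2)) v).hasSum

theorem hasSum_heckeTerm3_add (hq0 : q ≠ 0) (hq1 : ‖q‖ < 1) {x : ℂ} (hx : ‖x * q‖ < 1) (t v : ℕ) :
    HasSum (fun p : HeckeNonnegIndex ↦ heckeTerm3 q x (t + 1) (p.1.1, p.1.2.1, p.1.2.2 + v))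
      (-(q ^ (-(t : ℤ) - 1) * heckeSum q x (t + 1) v)) := by
  have hy (p : ℕ × ℕ) := norm_mul_pow_succ_le hq1 x (p.1 + p.2)
  have ha₁ := summable_heckeCoeff hq1 t
  have ha₂ := summable_heckeCoeff_mul hq1 t
  have hcast : -(t : ℤ) - 1 = -(t + 1 : ℕ) := by push_cast; ring
  simp only [heckeSum, mul_one_sub, sub_mul]
  rw [(summable_mul_pow_div_one_sub ha₁ hx hy v).tsum_sub
    (summable_mul_pow_div_one_sub ha₂ hx hy v), mul_sub, neg_sub, sub_eq_neg_add, ← neg_mul,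
    ← heckeNonnegEquiv.hasSum_iff]
  refine .sum ?_ ?_
  · convert! (hasSum_mul_pow_geometric ha₁ hx hy v).mul_left (-q ^ (-(t : ℤ) - 1)) using 1
    funext p
    rw [hcast, neg_mul, ← heckeTerm3_of_lt hq0]
    simp [heckeNonnegEquiv]
  · convert! (hasSum_mul_pow_geometric ha₂ hx hy v).mul_left (q ^ (-(t : ℤ) - 1)) using 1
    funext p
    rw [hcast, ← heckeTerm3_of_gt hq0]
    simp [heckeNonnegEquiv]

theorem hasSum_heckeTerm3_nonneg (hq0 : q ≠ 0) (hq1 : ‖q‖ < 1) {x : ℂ} (hx : ‖x * q‖ < 1)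
    (t : ℕ) :
    HasSum (fun p : HeckeNonnegIndex ↦ heckeTerm3 q x (t + 1) p.1)
      (-(q ^ (-(t : ℤ) - 1) * heckeSum q x (t + 1) 0)) := by
  simpa using hasSum_heckeTerm3_add hq0 hq1 hx t 0

theorem hasSum_heckeTerm3_neg (hq0 : q ≠ 0) (hq1 : ‖q‖ < 1) {x : ℂ} (hx : ‖x⁻¹ * q‖ < 1)
    (t : ℕ) :
    HasSum (fun p : HeckeNegIndex ↦ heckeTerm3 q x (t + 1) p.1)
      (-(q ^ (-(t : ℤ) - 1) * heckeSum q x⁻¹ (t + 1) 1)) := by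
  rw [← heckeReflection.hasSum_iff]
  convert! hasSum_heckeTerm3_add hq0 hq1 hx t 1 using 1
  exact funext fun p ↦ heckeTerm3_reflection q x (t + 1) _ _ _

end HeckeSeries

section Expansion

variable {q : ℂ}

theorem one_sub_sq_div_mul_eq {x y : ℂ} (hx : x ≠ 0) (h₁ : 1 - x * y ≠ 0) (h₂ : 1 - y / x ≠ 0) :
    (1 - y ^ 2) / ((1 - x * y) * (1 - y / x)) =
      (x * y) ^ 0 / (1 - x * y) + (x⁻¹ * y) ^ 1 / (1 - x⁻¹ * y) := by
  rw [← div_eq_inv_mul, div_add_div _ _ h₁ h₂]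
  congr 1
  field_simp
  ring

theorem tsum_uWeight_mul_chainSum (hq0 : q ≠ 0) (hq1 : ‖q‖ < 1) {x : ℂ} (hx : x ≠ 0)
    (hx₁ : ‖x * q‖ < 1) (hx₂ : ‖x⁻¹ * q‖ < 1) (t : ℕ) :
    ∑' N, uWeight q x N * chainSum q t N =
      qPochInf q (x * q) * qPochInf q (q / x) / qPochInf q q ^ 2 *
        (heckeSum q x (t + 1) 0 + heckeSum q x⁻¹ (t + 1) 1) := by
  have h₁ (M : ℕ) : 1 - x * q ^ (M + 1) ≠ 0 :=
    (isUnit_one_sub_of_norm_lt_one ((norm_mul_pow_succ_le hq1 x M).trans_lt hx₁)).ne_zero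
  have h₂ (M : ℕ) : 1 - q ^ (M + 1) / x ≠ 0 := by
    rw [div_eq_inv_mul]
    exact (isUnit_one_sub_of_norm_lt_one ((norm_mul_pow_succ_le hq1 x⁻¹ M).trans_lt hx₂)).ne_zero
  have hpair := isBaileyPair_chainSum hq0 (not_isOfFinOrder_of_norm_lt_one hq1) t
  have hsum := hasSum_sum_antidiagonal
    ((hasSum_heckeSum hq1 hx₁ t 0).add (hasSum_heckeSum hq1 hx₂ t 1))
  rw [hpair.tsum_uWeight_mul hq1 hx (summable_norm_heckeAlpha_mul_pow hq0 hq1 t) h₁ h₂,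
    ← hsum.tsum_eq]
  congr 1
  refine tsum_congr fun M ↦ ?_
  have hfrac := one_sub_sq_div_mul_eq hx (h₁ M) (h₂ M)
  calc heckeAlpha q t M * q ^ (M + 1) / ((1 - x * q ^ (M + 1)) * (1 - q ^ (M + 1) / x))
      = (∑ p ∈ antidiagonal M, heckeCoeff q (t + 1) p.1 p.2 * (1 - q ^ (2 * p.1 + 1))) *
          ((1 - (q ^ (M + 1)) ^ 2) / ((1 - x * q ^ (M + 1)) * (1 - q ^ (M + 1) / x))) := by
        rw [heckeAlpha]
        field_simp
        ring
    _ = _ := by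
        rw [hfrac, sum_mul]
        refine sum_congr rfl fun p hp ↦ ?_
        rw [HasAntidiagonal.mem_antidiagonal.1 hp, mul_add]

end Expansion

/-- Hecke-type triple-sum expansion of `U_t(-x;q)` (the paper's `t` is
`t+1` here), valid for `|q| < |x| < |q|⁻¹`, with absolute convergence of each series. -/
theorem stmt2 (t : ℕ) (q x : ℂ) (hq0 : 0 < ‖q‖) (hq1 : ‖q‖ < 1)
    (hx1 : ‖q‖ < ‖x‖) (hx2 : ‖x‖ < ‖q‖⁻¹) :
    Summable (fun k : {k : Fin (t+1) → ℕ //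
        (∀ i : Fin t, k i.castSucc ≤ k i.succ) ∧ 1 ≤ k 0} =>
      ‖UtTerm q x t k.1‖) ∧
    Summable (fun p : {p : ℤ × ℤ × ℤ // (0 ≤ p.1 ∧ 0 ≤ p.2.1 ∧ 0 ≤ p.2.2) ∧
        p.1 % 2 ≠ p.2.1 % 2} =>
      ‖heckeTerm3 q x ((t : ℤ) + 1) p.1‖) ∧
    Summable (fun p : {p : ℤ × ℤ × ℤ // (p.1 < 0 ∧ p.2.1 < 0 ∧ p.2.2 < 0) ∧
        p.1 % 2 ≠ p.2.1 % 2} =>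
      ‖heckeTerm3 q x ((t : ℤ) + 1) p.1‖) ∧
    q ^ (-(t : ℤ) - 1) *
      ∑' k : {k : Fin (t+1) → ℕ //
          (∀ i : Fin t, k i.castSucc ≤ k i.succ) ∧ 1 ≤ k 0},
        UtTerm q x t k.1 =
    -(qPochInf q (x * q) * qPochInf q (q / x) / (qPochInf q q) ^ 2) *
      ((∑' p : {p : ℤ × ℤ × ℤ // (0 ≤ p.1 ∧ 0 ≤ p.2.1 ∧ 0 ≤ p.2.2) ∧
            p.1 % 2 ≠ p.2.1 % 2},
          heckeTerm3 q x ((t : ℤ) + 1) p.1) +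
       (∑' p : {p : ℤ × ℤ × ℤ // (p.1 < 0 ∧ p.2.1 < 0 ∧ p.2.2 < 0) ∧
            p.1 % 2 ≠ p.2.1 % 2},
          heckeTerm3 q x ((t : ℤ) + 1) p.1)) := by
  have hq : q ≠ 0 := norm_pos_iff.1 hq0
  have hx : x ≠ 0 := norm_pos_iff.1 (hq0.trans hx1)
  have hx₁ : ‖x * q‖ < 1 := by rwa [norm_mul, ← lt_div_iff₀ hq0, one_div]
  have hx₂ : ‖x⁻¹ * q‖ < 1 := by rwa [norm_mul, norm_inv, inv_mul_lt_one₀ (hq0.trans hx1)]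
  have hU := hasSum_UtTerm hq1 x t
  have hnonneg := hasSum_heckeTerm3_nonneg hq hq1 hx₁ t
  have hneg := hasSum_heckeTerm3_neg hq hq1 hx₂ t
  refine ⟨hU.summable.norm, hnonneg.summable.norm, hneg.summable.norm, ?_⟩
  rw [hU.tsum_eq, hnonneg.tsum_eq, hneg.tsum_eq, tsum_uWeight_mul_chainSum hq hq1 hx hx₁ hx₂]
  ring
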